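/- Let R be a commutative noetherian ring. There are bijective correspondences between: (i) hereditary Tor-pairs (E, C) generated by classes of modules of finite flat dimension; (ii) hereditary cotorsion pairs (C, W) cogenerated by classes of pure-injective modules of finite injective dimension; (iii) functions φ : Spec R → ℤ_{≥0} with φ(p) ≤ depth(R_p) for all p; (iv) sequences of subsets X_0 ⊆ X_1 ⊆ ... ⊆ Spec R with Ass(Ω_{-i}(R)) ⊆ X_i for all i ≥ 0. The assignments are: a hereditary Tor-pair (E, C) of (i) yields the cotorsion pair (C, C^{⊥1}) of (ii); a function φ of (iii) yields the Tor-pair (E_φ, C_φ) with C_φ = {M : depth_{R_p}(M_p) ≥ φ(p) for all p ∈ Spec R}; a cotorsion pair (C, W) of (ii) yields the function φ_C(p) = inf{i ∈ ℤ_{≥0} : k(p) ∈ C_(i)} and the sequence X_n = Ass(C_(n)) := ∪_{M ∈ C_(n)} Ass M; and these assignments are mutually inverse bijections. -/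

import Mathlib

open CategoryTheory Opposite

noncomputable section

/-- Vanishing of the `n`-th Ext group of two `R`-modules. -/
def extV (R : Type) [Ring R] (M N : ModuleCat.{0} R) (n : ℕ) : Prop :=
  Subsingleton (((_root_.Ext ℤ (ModuleCat.{0} R) n).obj (op M)).obj N)

/-- Vanishing of the `n`-th Tor group of two `R`-modules. -/
def torV (R : Type) [CommRing R] (M N : ModuleCat.{0} R) (n : ℕ) : Prop :=
  Subsingleton (((Tor (ModuleCat.{0} R) n).obj M).obj N)

/-- `f : A →ₗ[R] B` is a pure monomorphism. -/
def IsPureMono (R : Type) [CommRing R] {A B : Type} [AddCommGroup A] [Module R A]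
    [AddCommGroup B] [Module R B] (f : A →ₗ[R] B) : Prop :=
  Function.Injective f ∧
    ∀ (Q : Type) [AddCommGroup Q] [Module R Q], Function.Injective (LinearMap.lTensor Q f)

/-- An `R`-module `N` is pure-injective if it is injective with respect to
pure monomorphisms. -/
def PureInjective (R : Type) [CommRing R] (N : Type) [AddCommGroup N] [Module R N] : Prop :=
  ∀ (A B : Type) [AddCommGroup A] [Module R A] [AddCommGroup B] [Module R B]
    (f : A →ₗ[R] B), IsPureMono R f → ∀ g : A →ₗ[R] N, ∃ h : B →ₗ[R] N, h.comp f = g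

/-- `N` has injective dimension at most `n`. -/
def injDimLE (R : Type) [Ring R] (N : ModuleCat.{0} R) (n : ℕ) : Prop :=
  ∀ M : ModuleCat.{0} R, ∀ j : ℕ, n < j → extV R M N j

/-- `M` has projective dimension at most `n`. -/
def projDimLE (R : Type) [Ring R] (M : ModuleCat.{0} R) (n : ℕ) : Prop :=
  ∀ N : ModuleCat.{0} R, ∀ j : ℕ, n < j → extV R M N j

/-- `M` has flat dimension at most `n`. -/
def flatDimLE (R : Type) [CommRing R] (M : ModuleCat.{0} R) (n : ℕ) : Prop :=
  ∀ N : ModuleCat.{0} R, ∀ j : ℕ, n < j → torV R M N j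

/-- The depth of a module over a commutative local ring. -/
def rdepth (A : Type) [CommRing A] [IsLocalRing A] (M : Type) [AddCommGroup M]
    [Module A M] : ℕ∞ :=
  sInf {n : ℕ∞ | ∃ i : ℕ, n = (i : ℕ∞) ∧
    ¬ extV A (ModuleCat.of A (IsLocalRing.ResidueField A)) (ModuleCat.of A M) i}

/-- `depth(R_p)`. -/
def ringDepthAt (R : Type) [CommRing R] (p : PrimeSpectrum R) : ℕ∞ :=
  rdepth (Localization.AtPrime p.asIdeal) (Localization.AtPrime p.asIdeal)

/-- `depth_{R_p}(M_p)`. -/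
def depthAt (R : Type) [CommRing R] (p : PrimeSpectrum R) (M : Type) [AddCommGroup M]
    [Module R M] : ℕ∞ :=
  rdepth (Localization.AtPrime p.asIdeal) (LocalizedModule p.asIdeal.primeCompl M)

/-- `f : M →ₗ[R] E` exhibits `E` as an injective envelope of `M`. -/
def IsInjectiveEnvelope (R : Type) [Ring R] {M E : Type} [AddCommGroup M] [Module R M]
    [AddCommGroup E] [Module R E] (f : M →ₗ[R] E) : Prop :=
  Module.Injective R E ∧ Function.Injective f ∧
    ∀ K : Submodule R E, K ≠ ⊥ → K ⊓ LinearMap.range f ≠ ⊥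

/-- The degree-`i` term of the Koszul cochain complex on `ℓ` generators over `A`:
a free module on the `i`-element subsets of `Fin ℓ`. -/
abbrev KosTerm (A : Type) [CommRing A] (ℓ i : ℕ) : Type :=
  {s : Finset (Fin ℓ) // s.card = i} → A

/-- The Koszul cochain differential (for the sequence `x`), from degree `i`
to degree `i+1`. -/
def kosD (A : Type) [CommRing A] {ℓ : ℕ} (x : Fin ℓ → A) (i : ℕ) :
    KosTerm A ℓ i →ₗ[A] KosTerm A ℓ (i + 1) where
  toFun f T := ∑ t ∈ T.1.attach,
    ((-1 : A) ^ ((T.1.filter (fun s => s < t.1)).card) * x t.1) •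
      f ⟨T.1.erase t.1, by
        rw [Finset.card_erase_of_mem t.2, T.2]; omega⟩
  map_add' f g := by
    funext T
    simp [mul_add, Finset.sum_add_distrib]
  map_smul' a f := by
    funext T
    rw [RingHom.id_apply]
    simp only [Pi.smul_apply, smul_eq_mul, Finset.mul_sum]
    exact Finset.sum_congr rfl fun t _ => by ring

/-- `S_k(x; A)`: the cokernel of the `(k-1)`-st differential of the Koszul cochain
complex of the sequence `x` (with `S_0 = A`). -/
def KosCoker (A : Type) [CommRing A] {ℓ : ℕ} (x : Fin ℓ → A) : ℕ → Type
  | 0 => A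
  | m + 1 => KosTerm A ℓ (m + 1) ⧸ LinearMap.range (kosD A x m)

instance kosCokerAddCommGroup (A : Type) [CommRing A] {ℓ : ℕ} (x : Fin ℓ → A) :
    (k : ℕ) → AddCommGroup (KosCoker A x k)
  | 0 => inferInstanceAs (AddCommGroup A)
  | m + 1 => inferInstanceAs
      (AddCommGroup (KosTerm A ℓ (m + 1) ⧸ LinearMap.range (kosD A x m)))

instance kosCokerModule (A : Type) [CommRing A] {ℓ : ℕ} (x : Fin ℓ → A) :
    (k : ℕ) → Module A (KosCoker A x k)
  | 0 => inferInstanceAs (Module A A)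
  | m + 1 => inferInstanceAs
      (Module A (KosTerm A ℓ (m + 1) ⧸ LinearMap.range (kosD A x m)))

/-- The `R`-module structure on `S_k(x; A)` obtained by restriction of scalars. -/
instance kosCokerModule' (R A : Type) [CommRing R] [CommRing A] [Algebra R A]
    {ℓ : ℕ} (x : Fin ℓ → A) (k : ℕ) : Module R (KosCoker A x k) :=
  Module.compHom _ (algebraMap R A)

/-- The left Ext^1-orthogonal class. -/
def leftPerp1 (R : Type) [Ring R] (𝒳 : Set (ModuleCat.{0} R)) : Set (ModuleCat.{0} R) :=
  {M | ∀ X ∈ 𝒳, extV R M X 1}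

/-- The right Ext^1-orthogonal class. -/
def rightPerp1 (R : Type) [Ring R] (𝒳 : Set (ModuleCat.{0} R)) : Set (ModuleCat.{0} R) :=
  {N | ∀ X ∈ 𝒳, extV R X N 1}

/-- A cotorsion pair. -/
def IsCotorsionPair (R : Type) [Ring R] (𝒞 𝒲 : Set (ModuleCat.{0} R)) : Prop :=
  𝒞 = leftPerp1 R 𝒲 ∧ 𝒲 = rightPerp1 R 𝒞

/-- A hereditary cotorsion pair. -/
def IsHereditaryCotorsionPair (R : Type) [Ring R] (𝒞 𝒲 : Set (ModuleCat.{0} R)) : Prop :=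
  IsCotorsionPair R 𝒞 𝒲 ∧ ∀ X ∈ 𝒞, ∀ Y ∈ 𝒲, ∀ i : ℕ, 1 ≤ i → extV R X Y i

/-- The class `𝒞_(i)` of a cotorsion pair. -/
def cotShift (R : Type) [Ring R] (𝒲 : Set (ModuleCat.{0} R)) (i : ℕ) : Set (ModuleCat.{0} R) :=
  {M | ∀ Y ∈ 𝒲, ∀ j : ℕ, i < j → extV R M Y j}

/-- The left Tor_1-orthogonal class. -/
def torLeft1 (R : Type) [CommRing R] (𝒳 : Set (ModuleCat.{0} R)) : Set (ModuleCat.{0} R) :=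
  {M | ∀ X ∈ 𝒳, torV R M X 1}

/-- The right Tor_1-orthogonal class. -/
def torRight1 (R : Type) [CommRing R] (𝒳 : Set (ModuleCat.{0} R)) : Set (ModuleCat.{0} R) :=
  {M | ∀ X ∈ 𝒳, torV R X M 1}

/-- A Tor-pair. -/
def IsTorPair (R : Type) [CommRing R] (ℰ 𝒞 : Set (ModuleCat.{0} R)) : Prop :=
  ℰ = torLeft1 R 𝒞 ∧ 𝒞 = torRight1 R ℰ

/-- A hereditary Tor-pair. -/
def IsHereditaryTorPair (R : Type) [CommRing R] (ℰ 𝒞 : Set (ModuleCat.{0} R)) : Prop :=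
  IsTorPair R ℰ 𝒞 ∧ ∀ X ∈ ℰ, ∀ Y ∈ 𝒞, ∀ i : ℕ, 1 ≤ i → torV R X Y i

/-- The residue field `k(p)` of `R_p` as an `R`-module. -/
abbrev resField (R : Type) [CommRing R] (p : PrimeSpectrum R) : Type :=
  LocalizedModule p.asIdeal.primeCompl (R ⧸ p.asIdeal)

/-- Minimal injective coresolution data; `C n` plays the role of the cosyzygy. -/
structure CosyzygySeq (R : Type) [CommRing R] (M : Type) [AddCommGroup M] [Module R M] :
    Type 1 where
  C : ℕ → ModuleCat.{0} R
  iso0 : (↥(C 0)) ≃ₗ[R] M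
  E : ℕ → ModuleCat.{0} R
  emb : ∀ n, (↥(C n)) →ₗ[R] (↥(E n))
  env : ∀ n, IsInjectiveEnvelope R (emb n)
  isoSucc : ∀ n, (↥(C (n + 1))) ≃ₗ[R] ((↥(E n)) ⧸ LinearMap.range (emb n))

section Stmt17

variable (R : Type) [CommRing R]

/-- Collection (i): hereditary Tor-pairs generated by classes of modules of finite
flat dimension. -/
def GoodI (ℰ 𝒞 : Set (ModuleCat.{0} R)) : Prop :=
  IsHereditaryTorPair R ℰ 𝒞 ∧
    ∃ 𝒢 : Set (ModuleCat.{0} R), (∀ X ∈ 𝒢, ∃ n : ℕ, flatDimLE R X n) ∧ 𝒞 = torRight1 R 𝒢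

/-- Collection (ii): hereditary cotorsion pairs cogenerated by classes of pure-injective
modules of finite injective dimension. -/
def GoodII (𝒞 𝒲 : Set (ModuleCat.{0} R)) : Prop :=
  IsHereditaryCotorsionPair R 𝒞 𝒲 ∧
    ∃ Pcl : Set (ModuleCat.{0} R),
      (∀ X ∈ Pcl, PureInjective R ↥X ∧ ∃ n : ℕ, injDimLE R X n) ∧ 𝒞 = leftPerp1 R Pcl

/-- Collection (iii): functions on the spectrum bounded by the depth function. -/
def GoodIII (φ : PrimeSpectrum R → ℕ) : Prop :=
  ∀ p : PrimeSpectrum R, (φ p : ℕ∞) ≤ ringDepthAt R p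

/-- Collection (iv): increasing sequences of subsets of the spectrum containing the
associated primes of the cosyzygies of `R`. -/
def GoodIV (X : ℕ → Set (PrimeSpectrum R)) : Prop :=
  (∀ n, X n ⊆ X (n + 1)) ∧
  ∀ (n : ℕ) (seq : CosyzygySeq R R),
    {p : PrimeSpectrum R | p.asIdeal ∈ associatedPrimes R ↥(seq.C n)} ⊆ X n

/-- The assignment (iii) → (i): the right class of the Tor-pair associated to `φ`. -/
def depthClass (φ : PrimeSpectrum R → ℕ) : Set (ModuleCat.{0} R) :=
  {M | ∀ p : PrimeSpectrum R, (φ p : ℕ∞) ≤ depthAt R p ↥M}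

/-- The assignment (ii) → (iii): `φ_𝒞(p) = inf {i ∣ k(p) ∈ 𝒞_(i)}`. -/
def phiOfCot (𝒲 : Set (ModuleCat.{0} R)) : PrimeSpectrum R → ℕ :=
  fun p => sInf {i : ℕ | ModuleCat.of R (resField R p) ∈ cotShift R 𝒲 i}

/-- The assignment (ii) → (iv): `X_n = Ass 𝒞_(n)`. -/
def seqOfCot (𝒲 : Set (ModuleCat.{0} R)) : ℕ → Set (PrimeSpectrum R) :=
  fun n => {p | ∃ M ∈ cotShift R 𝒲 n, p.asIdeal ∈ associatedPrimes R ↥M}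

end Stmt17

/-!
`Tor_1(X, M)` vanishes exactly when `Ext^1(M, X⁺)` does, where `X⁺` is the character module, and
`X⁺` is pure-injective, of injective dimension the flat dimension of `X`.  So the right class of a
Tor-pair as in (i) is the left class of a cotorsion pair as in (ii).

Let `(C, W)` be as in (ii), cogenerated by `P`, and let `M ∈ C`.  If `Ext^m_{R_p}(k(p), M_p) ≠ 0`
then `Ext^j_R(k(p), X) = 0` for all `X ∈ P` and `j > m`, that is `k(p) ∈ C_(m)`.  Hence
`φ_C(p) ≤ depth M_p` for all `M ∈ C`, and in particular `φ_C(p) ≤ depth R_p`.  Conversely, if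
`depth M_p ≥ φ_C(p)` for all `p`, then the residue fields `k(p)` occurring in the `i`-th term of the
minimal injective resolution of `M` satisfy `k(p) ∈ C_(i)`.  By Eklof's lemma the `i`-th term
itself has no Ext into `P` above degree `i`, and dimension shifting yields `Ext^1(M, P) = 0`.
Thus `C` is the class of modules with `depth M_p ≥ φ_C(p)`.

Starting from `φ` as in (iii) and `j < φ(p)`, the dual of a free resolution of `k(p)` over `R_p` is
exact up to degree `j`, so its `j`-th cokernel has finite flat dimension, and `Tor_1` against it
computes `Ext^j_{R_p}(k(p), M_p)`.  These cokernels generate the Tor-pair with right class `C_φ`.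
Shifting dimensions, `M ∈ (C_φ)_(i)` means `depth M_p ≥ φ(p) - i`, so `φ(p)` is the least `i` with
`k(p) ∈ (C_φ)_(i)` and `Ass (C_φ)_(n) = {p | φ(p) ≤ n}`.  Finally `p ∈ Ass Ω_{-n}(R)` exactly when
`Ext^n_{R_p}(k(p), R_p) ≠ 0`, which identifies the sequences of (iv) with the functions of (iii).
-/

universe u

/-! ### Short exact sequences and vanishing of Ext -/

/-- Vanishing of `Ext^n_R(M, N)`, the unbundled form of `extV` on which the development runs. -/
def ExtVanishes (R : Type u) [Ring R] (M N : Type u) [AddCommGroup M] [Module R M]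
    [AddCommGroup N] [Module R N] (n : ℕ) : Prop :=
  Subsingleton (Abelian.Ext (ModuleCat.of R M) (ModuleCat.of R N) n)

/-- The sequence `0 → A → B → C → 0` of modules, with maps `f` and `g`, is exact. -/
structure IsShortExact {R A B C : Type*} [Ring R] [AddCommGroup A] [Module R A]
    [AddCommGroup B] [Module R B] [AddCommGroup C] [Module R C]
    (f : A →ₗ[R] B) (g : B →ₗ[R] C) : Prop where
  injective : Function.Injective f
  exact : Function.Exact f g
  surjective : Function.Surjective g

namespace IsShortExact

section Basic

variable {R A B C : Type*} [Ring R] [AddCommGroup A] [Module R A]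
  [AddCommGroup B] [Module R B] [AddCommGroup C] [Module R C]
  {f : A →ₗ[R] B} {g : B →ₗ[R] C}

theorem mkQ (K : Submodule R A) : IsShortExact K.subtype K.mkQ :=
  ⟨K.injective_subtype, LinearMap.exact_subtype_mkQ K, K.mkQ_surjective⟩

theorem ker_subtype (hg : Function.Surjective g) : IsShortExact (LinearMap.ker g).subtype g :=
  ⟨Submodule.injective_subtype _, LinearMap.exact_subtype_ker_map g, hg⟩

theorem range_mkQ (hf : Function.Injective f) : IsShortExact f (LinearMap.range f).mkQ :=
  ⟨hf, LinearMap.exact_map_mkQ_range f, Submodule.mkQ_surjective _⟩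

theorem rangeRestrict (g : B →ₗ[R] C) :
    IsShortExact (LinearMap.ker g).subtype g.rangeRestrict := by
  refine ⟨Submodule.injective_subtype _, ?_, g.surjective_rangeRestrict⟩
  have h := LinearMap.exact_subtype_ker_map g.rangeRestrict
  rwa [LinearMap.ker_rangeRestrict] at h

theorem comp_eq_zero (h : IsShortExact f g) : g ∘ₗ f = 0 :=
  h.exact.linearMap_comp_eq_zero

theorem restrictScalars (S : Type*) [Ring S] [Module S A] [Module S B] [Module S C]
    [LinearMap.CompatibleSMul A B S R] [LinearMap.CompatibleSMul B C S R]
    (h : IsShortExact f g) : IsShortExact (f.restrictScalars S) (g.restrictScalars S) :=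
  ⟨h.injective, h.exact, h.surjective⟩

end Basic

variable {R : Type u} [Ring R] {A B C M N : Type u} [AddCommGroup A] [Module R A]
  [AddCommGroup B] [Module R B] [AddCommGroup C] [Module R C] [AddCommGroup M] [Module R M]
  [AddCommGroup N] [Module R N] {f : A →ₗ[R] B} {g : B →ₗ[R] C} {n : ℕ}

theorem shortExact (h : IsShortExact f g) :
    (ModuleCat.shortComplexOfCompEqZero f g h.comp_eq_zero).ShortExact :=
  ModuleCat.shortComplex_shortExact _ h.exact h.injective h.surjective

theorem contravariant_extVanishes₁ (h : IsShortExact f g) (hB : ExtVanishes R B N n)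
    (hC : ExtVanishes R C N (n + 1)) : ExtVanishes R A N n := by
  refine subsingleton_of_forall_eq 0 fun x => ?_
  obtain ⟨y, rfl⟩ := Abelian.Ext.contravariant_sequence_exact₁ h.shortExact (ModuleCat.of R N) x
    (add_comm 1 n) (hC.elim _ _)
  rw [hB.elim y 0, Abelian.Ext.comp_zero]

theorem contravariant_extVanishes₂ (h : IsShortExact f g) (hA : ExtVanishes R A N n)
    (hC : ExtVanishes R C N n) : ExtVanishes R B N n := by
  refine subsingleton_of_forall_eq 0 fun x => ?_
  obtain ⟨y, rfl⟩ := Abelian.Ext.contravariant_sequence_exact₂ h.shortExact (ModuleCat.of R N) x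
    (hA.elim _ _)
  rw [hC.elim y 0, Abelian.Ext.comp_zero]

theorem contravariant_extVanishes₃ (h : IsShortExact f g) (hA : ExtVanishes R A N n)
    (hB : ExtVanishes R B N (n + 1)) : ExtVanishes R C N (n + 1) := by
  refine subsingleton_of_forall_eq 0 fun x => ?_
  obtain ⟨y, rfl⟩ := Abelian.Ext.contravariant_sequence_exact₃ h.shortExact (ModuleCat.of R N) x
    (hB.elim _ _) (add_comm 1 n)
  rw [hA.elim y 0, Abelian.Ext.comp_zero]

theorem covariant_extVanishes₁ (h : IsShortExact f g) (hC : ExtVanishes R N C n)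
    (hB : ExtVanishes R N B (n + 1)) : ExtVanishes R N A (n + 1) := by
  refine subsingleton_of_forall_eq 0 fun x => ?_
  obtain ⟨y, rfl⟩ := Abelian.Ext.covariant_sequence_exact₁ (ModuleCat.of R N) h.shortExact x
    (hB.elim _ _) rfl
  rw [hC.elim y 0, Abelian.Ext.zero_comp]

theorem covariant_extVanishes₂ (h : IsShortExact f g) (hA : ExtVanishes R N A n)
    (hC : ExtVanishes R N C n) : ExtVanishes R N B n := by
  refine subsingleton_of_forall_eq 0 fun x => ?_
  obtain ⟨y, rfl⟩ := Abelian.Ext.covariant_sequence_exact₂ (ModuleCat.of R N) h.shortExact x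
    (hC.elim _ _)
  rw [hA.elim y 0, Abelian.Ext.zero_comp]

theorem covariant_extVanishes₃ (h : IsShortExact f g) (hB : ExtVanishes R N B n)
    (hA : ExtVanishes R N A (n + 1)) : ExtVanishes R N C n := by
  refine subsingleton_of_forall_eq 0 fun x => ?_
  obtain ⟨y, rfl⟩ := Abelian.Ext.covariant_sequence_exact₃ (ModuleCat.of R N) h.shortExact x rfl
    (hA.elim _ _)
  rw [hB.elim y 0, Abelian.Ext.zero_comp]

theorem exists_lift (h : IsShortExact f g) (hA : ExtVanishes R M A 1) (u : M →ₗ[R] C) :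
    ∃ v : M →ₗ[R] B, g ∘ₗ v = u := by
  obtain ⟨y, hy⟩ := Abelian.Ext.covariant_sequence_exact₃ (ModuleCat.of R M) h.shortExact
    (Abelian.Ext.mk₀ (ModuleCat.ofHom u)) rfl (hA.elim _ _)
  obtain ⟨v, rfl⟩ := (Abelian.Ext.mk₀_bijective _ _).2 y
  rw [Abelian.Ext.mk₀_comp_mk₀] at hy
  exact ⟨v.hom, congrArg ModuleCat.Hom.hom ((Abelian.Ext.mk₀_bijective _ _).1 hy)⟩

theorem exists_extend (h : IsShortExact f g) (hC : ExtVanishes R C N 1) (u : A →ₗ[R] N) :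
    ∃ v : B →ₗ[R] N, v ∘ₗ f = u := by
  obtain ⟨y, hy⟩ := Abelian.Ext.contravariant_sequence_exact₁ h.shortExact (ModuleCat.of R N)
    (Abelian.Ext.mk₀ (ModuleCat.ofHom u)) rfl (hC.elim _ _)
  obtain ⟨v, rfl⟩ := (Abelian.Ext.mk₀_bijective _ _).2 y
  rw [Abelian.Ext.mk₀_comp_mk₀] at hy
  exact ⟨v.hom, congrArg ModuleCat.Hom.hom ((Abelian.Ext.mk₀_bijective _ _).1 hy)⟩

theorem extVanishes_one_of_exists_lift (h : IsShortExact f g) (hB : ExtVanishes R M B 1)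
    (hlift : ∀ u : M →ₗ[R] C, ∃ v : M →ₗ[R] B, g ∘ₗ v = u) : ExtVanishes R M A 1 := by
  refine subsingleton_of_forall_eq 0 fun x => ?_
  obtain ⟨y, rfl⟩ := Abelian.Ext.covariant_sequence_exact₁ (ModuleCat.of R M) h.shortExact x
    (hB.elim _ _) rfl
  obtain ⟨u, rfl⟩ := (Abelian.Ext.mk₀_bijective _ _).2 y
  obtain ⟨v, hv⟩ := hlift u.hom
  have hu : u = ModuleCat.ofHom v ≫ ModuleCat.ofHom g := ModuleCat.hom_ext hv.symm
  rw [hu, ← Abelian.Ext.mk₀_comp_mk₀, Abelian.Ext.comp_assoc_of_second_deg_zero]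
  erw [h.shortExact.comp_extClass]
  rw [Abelian.Ext.comp_zero]

theorem extVanishes_one_of_exists_extend (h : IsShortExact f g) (hB : ExtVanishes R B N 1)
    (hextend : ∀ u : A →ₗ[R] N, ∃ v : B →ₗ[R] N, v ∘ₗ f = u) : ExtVanishes R C N 1 := by
  refine subsingleton_of_forall_eq 0 fun x => ?_
  obtain ⟨y, rfl⟩ := Abelian.Ext.contravariant_sequence_exact₃ h.shortExact (ModuleCat.of R N) x
    (hB.elim _ _) (add_zero 1)
  obtain ⟨u, rfl⟩ := (Abelian.Ext.mk₀_bijective _ _).2 y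
  obtain ⟨v, hv⟩ := hextend u.hom
  have hu : u = ModuleCat.ofHom f ≫ ModuleCat.ofHom v := ModuleCat.hom_ext hv.symm
  rw [hu, ← Abelian.Ext.mk₀_comp_mk₀, ← Abelian.Ext.comp_assoc_of_second_deg_zero]
  erw [h.shortExact.extClass_comp]
  rw [Abelian.Ext.zero_comp]

end IsShortExact

section ExtVanishes

variable {R : Type u} [Ring R] {A B C M M' N N' : Type u} [AddCommGroup A] [Module R A]
  [AddCommGroup B] [Module R B] [AddCommGroup C] [Module R C] [AddCommGroup M] [Module R M]
  [AddCommGroup M'] [Module R M'] [AddCommGroup N] [Module R N] [AddCommGroup N'] [Module R N']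
  {f : A →ₗ[R] B} {g : B →ₗ[R] C} {n : ℕ}

theorem extVanishes_zero_iff : ExtVanishes R M N 0 ↔ Subsingleton (M →ₗ[R] N) :=
  (Abelian.Ext.homEquiv₀.trans ModuleCat.homEquiv).subsingleton_congr

theorem ExtVanishes.of_projective [Module.Projective R M] (n : ℕ) : ExtVanishes R M N (n + 1) := by
  have : Projective (ModuleCat.of R M) := (IsProjective.iff_projective M).1 inferInstance
  exact Abelian.Ext.subsingleton_of_projective _ _ _

theorem ExtVanishes.of_injective [Module.Injective R N] (n : ℕ) : ExtVanishes R M N (n + 1) := by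
  have : Injective (ModuleCat.of R N) := (Module.injective_iff_injective_object R N).1 inferInstance
  exact Abelian.Ext.subsingleton_of_injective _ _ _

theorem ExtVanishes.of_subsingleton [Subsingleton M] : ∀ n : ℕ, ExtVanishes R M N n
  | 0 => extVanishes_zero_iff.2 ⟨fun f g => LinearMap.ext fun x => by
      rw [Subsingleton.elim x 0, map_zero, map_zero]⟩
  | n + 1 => .of_projective n

theorem ExtVanishes.of_retract_left (i : M' →ₗ[R] M) (r : M →ₗ[R] M')
    (hri : r ∘ₗ i = LinearMap.id) (h : ExtVanishes R M N n) : ExtVanishes R M' N n := by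
  refine subsingleton_of_forall_eq 0 fun x => ?_
  have hid : ModuleCat.ofHom i ≫ ModuleCat.ofHom r = 𝟙 _ := ModuleCat.hom_ext hri
  rw [← Abelian.Ext.mk₀_id_comp x, ← hid, ← Abelian.Ext.mk₀_comp_mk₀_assoc,
    h.elim ((Abelian.Ext.mk₀ (ModuleCat.ofHom r)).comp x (zero_add n)) 0, Abelian.Ext.comp_zero]

theorem ExtVanishes.of_retract_right (i : N' →ₗ[R] N) (r : N →ₗ[R] N')
    (hri : r ∘ₗ i = LinearMap.id) (h : ExtVanishes R M N n) : ExtVanishes R M N' n := by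
  refine subsingleton_of_forall_eq 0 fun x => ?_
  have hid : ModuleCat.ofHom i ≫ ModuleCat.ofHom r = 𝟙 _ := ModuleCat.hom_ext hri
  rw [← Abelian.Ext.comp_mk₀_id x, ← hid, ← Abelian.Ext.mk₀_comp_mk₀,
    ← Abelian.Ext.comp_assoc_of_third_deg_zero,
    h.elim (x.comp (Abelian.Ext.mk₀ (ModuleCat.ofHom i)) (add_zero n)) 0, Abelian.Ext.zero_comp]

theorem extVanishes_congr_left (e : M ≃ₗ[R] M') : ExtVanishes R M N n ↔ ExtVanishes R M' N n :=
  ⟨.of_retract_left e.symm.toLinearMap e.toLinearMap e.comp_symm,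
    .of_retract_left e.toLinearMap e.symm.toLinearMap e.symm_comp⟩

theorem extVanishes_congr_right (e : N ≃ₗ[R] N') : ExtVanishes R M N n ↔ ExtVanishes R M N' n :=
  ⟨.of_retract_right e.symm.toLinearMap e.toLinearMap e.comp_symm,
    .of_retract_right e.toLinearMap e.symm.toLinearMap e.symm_comp⟩

namespace IsShortExact

theorem extVanishes_shift_left (h : IsShortExact f g) [Module.Projective R B] :
    ExtVanishes R C N (n + 2) ↔ ExtVanishes R A N (n + 1) :=
  ⟨h.contravariant_extVanishes₁ (.of_projective n),
    (h.contravariant_extVanishes₃ · (.of_projective _))⟩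

theorem extVanishes_shift_right (h : IsShortExact f g) [Module.Injective R B] :
    ExtVanishes R N A (n + 2) ↔ ExtVanishes R N C (n + 1) :=
  ⟨h.covariant_extVanishes₃ (.of_injective n), (h.covariant_extVanishes₁ · (.of_injective _))⟩

theorem extVanishes_one_iff_exists_lift (h : IsShortExact f g) [Module.Injective R B] :
    ExtVanishes R M A 1 ↔ ∀ u : M →ₗ[R] C, ∃ v : M →ₗ[R] B, g ∘ₗ v = u :=
  ⟨h.exists_lift, h.extVanishes_one_of_exists_lift (.of_injective 0)⟩

theorem extVanishes_one_iff_exists_extend (h : IsShortExact f g) [Module.Projective R B] :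
    ExtVanishes R C N 1 ↔ ∀ u : A →ₗ[R] N, ∃ v : B →ₗ[R] N, v ∘ₗ f = u :=
  ⟨h.exists_extend, h.extVanishes_one_of_exists_extend (.of_projective 0)⟩

end IsShortExact

variable (R N) in
theorem exists_injective_embedding :
    ∃ (I : Type u) (_ : AddCommGroup I) (_ : Module R I) (f : N →ₗ[R] I),
      Module.Injective R I ∧ Function.Injective f := by
  let P : InjectivePresentation (ModuleCat.of R N) := (EnoughInjectives.presentation _).some
  have hP : Injective (ModuleCat.of R P.J) := P.injective
  exact ⟨P.J, inferInstance, inferInstance, P.f.hom,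
    (Module.injective_iff_injective_object R P.J).2 hP,
    (ModuleCat.mono_iff_injective _).1 P.mono⟩

theorem ExtVanishes.finsupp (ι : Type u) (h : ExtVanishes R M N (n + 1)) :
    ExtVanishes R (ι →₀ M) N (n + 1) := by
  induction n generalizing N with
  | zero =>
    obtain ⟨I, _, _, f, _, hf⟩ := exists_injective_embedding R N
    rw [(IsShortExact.range_mkQ hf).extVanishes_one_iff_exists_lift] at h ⊢
    intro u
    choose v hv using fun i => h (u ∘ₗ Finsupp.lsingle i)
    refine ⟨Finsupp.lsum ℕ v, Finsupp.lhom_ext fun i x => ?_⟩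
    simpa using LinearMap.congr_fun (hv i) x
  | succ n ih =>
    obtain ⟨I, _, _, f, _, hf⟩ := exists_injective_embedding R N
    rw [(IsShortExact.range_mkQ hf).extVanishes_shift_right] at h ⊢
    exact ih h

variable (R M) in
/-- The first syzygy of `M` with respect to its canonical free cover `M →₀ R`. -/
abbrev Syzygy : Type u := LinearMap.ker (Finsupp.linearCombination R (id : M → M))

variable (R M) in
theorem isShortExact_syzygy :
    IsShortExact (A := Syzygy R M) (B := M →₀ R) (Submodule.subtype _)
      (Finsupp.linearCombination R id) :=
  .ker_subtype (Finsupp.linearCombination_id_surjective R M)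

end ExtVanishes

/-! ### Comparison with derived functors, and character modules -/

section Resolution

variable {R : Type} [CommRing R] {M : ModuleCat.{0} R} (P : ProjectiveResolution M)
  (N : ModuleCat.{0} R) (n : ℕ)

theorem subsingleton_ext_succ_iff :
    Subsingleton (Abelian.Ext M N (n + 1)) ↔
      ∀ f : P.complex.X (n + 1) ⟶ N, P.complex.d (n + 2) (n + 1) ≫ f = 0 →
        ∃ g : P.complex.X n ⟶ N, P.complex.d (n + 1) n ≫ g = f := by
  refine ⟨fun h f hf => (P.extMk_eq_zero_iff f (n + 2) rfl hf n rfl).1 (h.elim _ _), fun h => ?_⟩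
  refine subsingleton_of_forall_eq 0 fun x => ?_
  obtain ⟨f, hf, rfl⟩ := P.extMk_surjective x (n + 2) rfl
  exact (P.extMk_eq_zero_iff _ _ _ _ n rfl).2 (h f hf)

theorem extV_succ_iff :
    extV R M N (n + 1) ↔
      ∀ f : P.complex.X (n + 1) ⟶ N, P.complex.d (n + 2) (n + 1) ≫ f = 0 →
        ∃ g : P.complex.X n ⟶ N, P.complex.d (n + 1) n ≫ g = f := by
  rw [extV, (P.isoExt (R := ℤ) (n + 1) N).toLinearEquiv.toEquiv.subsingleton_congr,
    ← ModuleCat.isZero_iff_subsingleton, ← HomologicalComplex.exactAt_iff_isZero_homology,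
    HomologicalComplex.exactAt_iff' _ n (n + 1) (n + 2) (by simp) (by simp),
    ShortComplex.moduleCat_exact_iff]
  rfl

theorem extV_zero_iff :
    extV R M N 0 ↔ ∀ f : P.complex.X 0 ⟶ N, P.complex.d 1 0 ≫ f = 0 → f = 0 := by
  rw [extV, (P.isoExt (R := ℤ) 0 N).toLinearEquiv.toEquiv.subsingleton_congr,
    ← ModuleCat.isZero_iff_subsingleton, ← HomologicalComplex.exactAt_iff_isZero_homology,
    HomologicalComplex.exactAt_iff' _ 0 0 1 (by simp) (by simp), ShortComplex.moduleCat_exact_iff]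
  have hd : (P.complex.linearYonedaObj ℤ N).d 0 0 = 0 := HomologicalComplex.shape _ _ _ (by simp)
  refine ⟨fun h f hf => ?_, fun h f hf => ⟨0, (map_zero _).trans (h f hf).symm⟩⟩
  obtain ⟨x, rfl⟩ := h f hf
  exact congrArg (fun k => k.hom x) hd

theorem subsingleton_hom_iff :
    Subsingleton (M ⟶ N) ↔ ∀ f : P.complex.X 0 ⟶ N, P.complex.d 1 0 ≫ f = 0 → f = 0 := by
  have hπ : Epi (P.π.f 0) := inferInstance
  refine ⟨fun h f hf => ?_, fun h => subsingleton_of_forall_eq 0 fun a => ?_⟩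
  · rw [← P.exact₀.g_desc f hf]
    exact (congrArg (P.π.f 0 ≫ ·) (h.elim _ 0)).trans Limits.comp_zero
  · refine (cancel_epi (P.π.f 0)).1 ((h (P.π.f 0 ≫ a) ?_).trans Limits.comp_zero.symm)
    exact (P.complex_d_comp_π_f_zero_assoc a).trans Limits.zero_comp

open scoped MonoidalCategory in
theorem torV_succ_iff_exact :
    torV R N M (n + 1) ↔ Function.Exact ((P.complex.d (n + 2) (n + 1)).hom.lTensor N)
      ((P.complex.d (n + 1) n).hom.lTensor N) := by
  let F := (MonoidalCategory.tensoringLeft (ModuleCat.{0} R)).obj N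
  change Subsingleton ((F.leftDerived (n + 1)).obj M) ↔ _
  rw [(P.isoLeftDerivedObj F (n + 1)).toLinearEquiv.toEquiv.subsingleton_congr,
    ← ModuleCat.isZero_iff_subsingleton]
  change Limits.IsZero (HomologicalComplex.homology _ _) ↔ _
  rw [← HomologicalComplex.exactAt_iff_isZero_homology,
    HomologicalComplex.exactAt_iff' _ (n + 2) (n + 1) n (by simp) (by simp),
    ShortComplex.ShortExact.moduleCat_exact_iff_function_exact]
  rfl

end Resolution

theorem extV_iff {R : Type} [CommRing R] (M N : ModuleCat.{0} R) :
    ∀ n : ℕ, extV R M N n ↔ ExtVanishes R M N n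
  | 0 => (extV_zero_iff (projectiveResolution M) N).trans
      ((subsingleton_hom_iff _ N).symm.trans Abelian.Ext.homEquiv₀.subsingleton_congr.symm)
  | n + 1 => (extV_succ_iff (projectiveResolution M) N n).trans
      (subsingleton_ext_succ_iff _ N n).symm

section CharacterModule

variable {R A B C M : Type*} [CommRing R] [AddCommGroup A] [Module R A] [AddCommGroup B]
  [Module R B] [AddCommGroup C] [Module R C] [AddCommGroup M] [Module R M]
  {f : A →ₗ[R] B} {g : B →ₗ[R] C}

open CharacterModule

theorem exists_character_of_notMem {S : Submodule R A} {a : A} (ha : a ∉ S) :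
    ∃ c : CharacterModule A, (∀ s ∈ S, c s = 0) ∧ c a ≠ 0 := by
  obtain ⟨c, hc⟩ := exists_character_apply_ne_zero_of_ne_zero
    (mt (Submodule.Quotient.mk_eq_zero S).1 ha)
  exact ⟨dual S.mkQ c, fun s hs =>
    (congrArg c ((Submodule.Quotient.mk_eq_zero S).2 hs)).trans (map_zero c), hc⟩

theorem exists_dual_eq_of_exact (h : Function.Exact f g) {c : CharacterModule B}
    (hc : dual f c = 0) : ∃ c' : CharacterModule C, dual g c' = c := by
  let i : B ⧸ LinearMap.ker g →ₗ[R] C := (LinearMap.ker g).liftQ g le_rfl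
  have hi : Function.Injective i :=
    LinearMap.ker_eq_bot.1 (Submodule.ker_liftQ_eq_bot _ _ _ le_rfl)
  have hker : (LinearMap.ker g).toAddSubgroup ≤ c.ker := fun x hx => by
    obtain ⟨y, rfl⟩ := (h x).1 hx
    exact DFunLike.congr_fun hc y
  obtain ⟨c', hc'⟩ := dual_surjective_of_injective i hi
    (QuotientAddGroup.lift (LinearMap.ker g).toAddSubgroup c hker)
  exact ⟨c', DFunLike.ext _ _ fun x => DFunLike.congr_fun hc' ((LinearMap.ker g).mkQ x)⟩

theorem exact_dual_iff : Function.Exact (dual g) (dual f) ↔ Function.Exact f g := by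
  refine ⟨fun h x => ⟨fun hx => ?_, ?_⟩, fun h c => ⟨exists_dual_eq_of_exact h, ?_⟩⟩
  · by_contra hxf
    obtain ⟨c, hc, hcx⟩ := exists_character_of_notMem (S := LinearMap.range f) hxf
    obtain ⟨c', rfl⟩ := (h c).1 (DFunLike.ext _ _ fun y => hc _ ⟨y, rfl⟩)
    exact hcx ((congrArg c' hx).trans (map_zero c'))
  · rintro ⟨y, rfl⟩
    exact eq_zero_of_character_apply fun c => DFunLike.congr_fun (h.apply_apply_eq_zero c) y
  · rintro ⟨c', rfl⟩
    rw [← LinearMap.comp_apply, ← dual_comp, h.linearMap_comp_eq_zero, dual_zero,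
      LinearMap.zero_apply]

theorem IsShortExact.dual (h : IsShortExact f g) :
    IsShortExact (CharacterModule.dual g) (CharacterModule.dual f) :=
  ⟨dual_injective_of_surjective _ h.surjective, exact_dual_iff.2 h.exact,
    dual_surjective_of_injective _ h.injective⟩

theorem dual_rTensor_homEquiv (f : A →ₗ[R] B) (u : B →ₗ[R] CharacterModule M) :
    CharacterModule.dual (f.rTensor M) (homEquiv u) = homEquiv (u ∘ₗ f) := by
  apply homEquiv.symm.injective
  rw [LinearEquiv.symm_apply_apply]
  rfl

theorem dual_lTensor_homEquiv (f : A →ₗ[R] B) (u : M →ₗ[R] CharacterModule B) :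
    CharacterModule.dual (f.lTensor M) (homEquiv u) =
      homEquiv (CharacterModule.dual f ∘ₗ u) := by
  apply homEquiv.symm.injective
  rw [LinearEquiv.symm_apply_apply]
  rfl

theorem exact_lTensor_iff_exact_lcomp :
    Function.Exact (f.lTensor M) (g.lTensor M) ↔
      Function.Exact (g.lcomp R (CharacterModule M)) (f.lcomp R (CharacterModule M)) := by
  have hcomm : Function.Exact (f.lTensor M) (g.lTensor M) ↔
      Function.Exact (f.rTensor M) (g.rTensor M) :=
    (Function.Exact.iff_of_ladder_linearEquiv (e₁ := TensorProduct.comm R M A)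
      (e₂ := TensorProduct.comm R M B) (e₃ := TensorProduct.comm R M C)
      (TensorProduct.ext' fun _ _ => rfl) (TensorProduct.ext' fun _ _ => rfl)).symm
  rw [hcomm, ← exact_dual_iff]
  exact Function.Exact.iff_of_ladder_linearEquiv (e₁ := homEquiv) (e₂ := homEquiv)
    (e₃ := homEquiv) (LinearMap.ext (dual_rTensor_homEquiv g))
    (LinearMap.ext (dual_rTensor_homEquiv f))

end CharacterModule

section TorPairing

variable {R : Type} [CommRing R]

theorem torV_succ_iff (X N : ModuleCat.{0} R) (n : ℕ) :
    torV R X N (n + 1) ↔ ExtVanishes R N (CharacterModule X) (n + 1) := by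
  let P := projectiveResolution N
  rw [torV_succ_iff_exact P, exact_lTensor_iff_exact_lcomp]
  refine Iff.trans ⟨fun h f hf => ?_, fun h u => ⟨fun hu => ?_, ?_⟩⟩
    (subsingleton_ext_succ_iff P (ModuleCat.of R (CharacterModule X)) n).symm
  · obtain ⟨v, hv⟩ := (h f.hom).1 (congrArg ModuleCat.Hom.hom hf)
    exact ⟨ModuleCat.ofHom v, ModuleCat.hom_ext hv⟩
  · obtain ⟨v, hv⟩ := h (ModuleCat.ofHom u) (ModuleCat.hom_ext hu)
    exact ⟨v.hom, congrArg ModuleCat.Hom.hom hv⟩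
  · rintro ⟨v, rfl⟩
    have hd := congrArg ModuleCat.Hom.hom (P.complex.d_comp_d (n + 2) (n + 1) n)
    exact LinearMap.ext fun x => (congrArg v (LinearMap.congr_fun hd x)).trans (map_zero v)

theorem flatDimLE_iff_injDimLE (X : ModuleCat.{0} R) (n : ℕ) :
    flatDimLE R X n ↔ injDimLE R (ModuleCat.of R (CharacterModule X)) n := by
  refine forall_congr' fun N => forall_congr' fun j => ?_
  cases j with
  | zero => simp only [Nat.not_lt_zero, IsEmpty.forall_iff]
  | succ j => rw [torV_succ_iff, extV_iff]

variable {A B C M : Type} [AddCommGroup A] [Module R A] [AddCommGroup B] [Module R B]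
  [AddCommGroup C] [Module R C] [AddCommGroup M] [Module R M] {f : A →ₗ[R] B} {g : B →ₗ[R] C}

variable (R M) in
theorem pureInjective_characterModule : PureInjective R (CharacterModule M) :=
  fun _ _ _ _ _ _ f hf => rTensor_injective_iff_lcomp_surjective.1
    ((LinearMap.lTensor_inj_iff_rTensor_inj M f).1 (hf.2 M))

instance injective_characterModule [Module.Flat R M] : Module.Injective R (CharacterModule M) :=
  (Module.Flat.iff_characterModule_baer.1 inferInstance).injective

theorem IsShortExact.extVanishes_one_characterModule_iff [Module.Flat R B]
    (h : IsShortExact f g) :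
    ExtVanishes R M (CharacterModule C) 1 ↔ Function.Injective (f.lTensor M) := by
  rw [h.dual.extVanishes_one_iff_exists_lift, ← CharacterModule.dual_surjective_iff_injective,
    ← EquivLike.surjective_comp CharacterModule.homEquiv,
    ← EquivLike.comp_surjective _ CharacterModule.homEquiv.symm]
  refine forall_congr' fun u => exists_congr fun v => ?_
  rw [Function.comp_apply, Function.comp_apply, dual_lTensor_homEquiv,
    LinearEquiv.symm_apply_apply]

theorem IsShortExact.extVanishes_characterModule_shift [Module.Flat R B] {n : ℕ}
    (h : IsShortExact f g) : ExtVanishes R M (CharacterModule C) (n + 2) ↔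
      ExtVanishes R M (CharacterModule A) (n + 1) :=
  h.dual.extVanishes_shift_right

end TorPairing

/-! ### Finite free resolutions -/

/-- A resolution of `T` by finite free modules, cut into the short exact sequences
`0 → syz (i + 1) → A^(rank i) → syz i → 0`, where `syz 0` is identified with `T`. -/
structure FiniteFreeResolution (A : Type u) [CommRing A] (T : Type u) [AddCommGroup T]
    [Module A T] where
  syz : ℕ → Type u
  [addCommGroup : ∀ i, AddCommGroup (syz i)]
  [module : ∀ i, Module A (syz i)]
  rank : ℕ → ℕ
  ι : ∀ i, syz (i + 1) →ₗ[A] (Fin (rank i) → A)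
  π : ∀ i, (Fin (rank i) → A) →ₗ[A] syz i
  isShortExact : ∀ i, IsShortExact (ι i) (π i)
  equiv : syz 0 ≃ₗ[A] T

namespace FiniteFreeResolution

attribute [instance] addCommGroup module

variable {A : Type u} [CommRing A] {T : Type u} [AddCommGroup T] [Module A T]

variable (A T) in
theorem nonempty [IsNoetherianRing A] [Module.Finite A T] :
    Nonempty (FiniteFreeResolution A T) := by
  choose r π hπ using fun M : FGModuleCat.{u} A => Module.Finite.exists_fin' A M
  let K (i : ℕ) : FGModuleCat.{u} A :=
    Nat.rec (.of A T) (fun _ M => .of A (LinearMap.ker (π M))) i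
  exact ⟨{
    syz i := (K i).obj.carrier
    rank i := r (K i)
    ι i := (LinearMap.ker (π (K i))).subtype
    π i := π (K i)
    isShortExact i := .ker_subtype (hπ (K i))
    equiv := .refl A T }⟩

variable (F : FiniteFreeResolution A T)

/-- The differential `A^(rank (i + 1)) → A^(rank i)` of the resolution. -/
def d (i : ℕ) : (Fin (F.rank (i + 1)) → A) →ₗ[A] (Fin (F.rank i) → A) :=
  F.ι i ∘ₗ F.π (i + 1)

@[simp]
theorem π_ι (i : ℕ) (x : F.syz (i + 1)) : F.π i (F.ι i x) = 0 :=
  (F.isShortExact i).exact.apply_apply_eq_zero x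

theorem exact_d (i : ℕ) : Function.Exact (F.d i) (F.π i) := by
  intro x
  rw [(F.isShortExact i).exact x, d, LinearMap.coe_comp,
    (F.isShortExact (i + 1)).surjective.range_comp]

variable (N : Type u) [AddCommGroup N] [Module A N]

theorem extVanishes_add_iff (n i : ℕ) :
    ExtVanishes A T N (n + i + 1) ↔ ExtVanishes A (F.syz i) N (n + 1) := by
  induction i generalizing n with
  | zero => exact (extVanishes_congr_left F.equiv).symm
  | succ i ih =>
    rw [← (F.isShortExact i).extVanishes_shift_left, ← ih (n + 1), add_right_comm n 1 i,
      ← add_assoc n]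

theorem extVanishes_succ_iff_surjective (i : ℕ) :
    ExtVanishes A T N (i + 1) ↔ Function.Surjective ((F.ι i).lcomp A N) := by
  have h := F.extVanishes_add_iff N 0 i
  rw [zero_add, (F.isShortExact i).extVanishes_one_iff_exists_extend] at h
  exact h

theorem extVanishes_zero_iff_subsingleton :
    ExtVanishes A T N 0 ↔ Subsingleton (F.syz 0 →ₗ[A] N) := by
  rw [← extVanishes_congr_left F.equiv, extVanishes_zero_iff]

theorem extVanishes_succ_iff (i : ℕ) :
    ExtVanishes A T N (i + 1) ↔
      Function.Exact ((F.d i).lcomp A N) ((F.d (i + 1)).lcomp A N) := by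
  have hexact := LinearMap.exact_lcomp_of_exact_of_surjective (N := N) (F.exact_d (i + 1))
    (F.isShortExact (i + 1)).surjective
  rw [F.extVanishes_succ_iff_surjective]
  constructor
  · intro h u
    rw [hexact u, ← h.range_comp]
    exact Iff.rfl
  · intro h w
    obtain ⟨v, hv⟩ := (h ((F.π (i + 1)).lcomp A N w)).1 (hexact.apply_apply_eq_zero w)
    exact ⟨v, LinearMap.lcomp_injective_of_surjective _ (F.isShortExact (i + 1)).surjective hv⟩

theorem extVanishes_zero_iff_injective :
    ExtVanishes A T N 0 ↔ Function.Injective ((F.d 0).lcomp A N) := by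
  have hexact := LinearMap.exact_lcomp_of_exact_of_surjective (N := N) (F.exact_d 0)
    (F.isShortExact 0).surjective
  have hinj := LinearMap.lcomp_injective_of_surjective (S := A) (N := N) (F.π 0)
    (F.isShortExact 0).surjective
  rw [F.extVanishes_zero_iff_subsingleton, ← LinearMap.ker_eq_bot, hexact.linearMap_ker_eq,
    LinearMap.range_eq_bot]
  exact ⟨fun h => LinearMap.ext fun u => by rw [h.elim u 0, map_zero, map_zero],
    fun h => ⟨fun u v => hinj (by rw [h]; rfl)⟩⟩

variable {F} in
private theorem exists_retraction {a : A} {i : ℕ} {w : Module.End A (Fin (F.rank i) → A)}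
    (hπ : ∀ x, F.π i (w x) = 0) (hι : ∀ x, w (F.ι i x) = a • F.ι i x) :
    ∃ g : (Fin (F.rank i) → A) →ₗ[A] F.syz (i + 1), ∀ x, g (F.ι i x) = a • x := by
  let e := LinearEquiv.ofInjective (F.ι i) (F.isShortExact i).injective
  refine ⟨e.symm.toLinearMap ∘ₗ w.codRestrict (LinearMap.range (F.ι i))
    fun x => ((F.isShortExact i).exact _).1 (hπ x), fun x => ?_⟩
  rw [LinearMap.comp_apply, LinearEquiv.coe_coe, LinearEquiv.symm_apply_eq, map_smul]
  exact Subtype.ext (hι x)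

/-- Multiplication by an element annihilating `T` is null-homotopic on the resolution. -/
theorem exists_smul_retraction {a : A} (ha : ∀ x : T, a • x = 0) (i : ℕ) :
    ∃ g : (Fin (F.rank i) → A) →ₗ[A] F.syz (i + 1), ∀ x, g (F.ι i x) = a • x := by
  induction i with
  | zero =>
    refine exists_retraction (w := a • LinearMap.id) (fun x => F.equiv.injective ?_) fun x => rfl
    simp only [LinearMap.smul_apply, map_smul, ha, map_zero]
  | succ i ih =>
    obtain ⟨g, hg⟩ := ih
    obtain ⟨h, hh⟩ := Module.projective_lifting_property (F.π (i + 1)) g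
      (F.isShortExact (i + 1)).surjective
    refine exists_retraction (w := a • LinearMap.id - h ∘ₗ F.d i) (fun x => ?_) fun x => ?_
    · have hπh : F.π (i + 1) (h (F.d i x)) = a • F.π (i + 1) x :=
        (LinearMap.congr_fun hh _).trans (hg _)
      simp [hπh]
    · simp [d]

end FiniteFreeResolution

/-! ### Depth and the vanishing of Ext out of the residue field -/

section TorsionByMaximalIdeal

open IsLocalRing

variable {R A L X : Type u} [CommRing R] [CommRing A] [IsLocalRing A] [Algebra R A]
  [AddCommGroup L] [Module A L] [AddCommGroup X] [Module R X] {n : ℕ}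

theorem exists_equiv_finsupp_residueField (h : Module.IsTorsionBySet A L (maximalIdeal A)) :
    ∃ κ : Type u, Nonempty (L ≃ₗ[A] (κ →₀ ResidueField A)) := by
  let _ : Module (ResidueField A) L := h.module
  have : IsScalarTower A (ResidueField A) L := h.isScalarTower
  exact ⟨_, ⟨(Module.Free.chooseBasis (ResidueField A) L).repr.restrictScalars A⟩⟩

theorem isTorsionBySet_residueField :
    Module.IsTorsionBySet A (ResidueField A) (maximalIdeal A) := by
  intro x a
  rw [← algebraMap_smul (ResidueField A) (a : A), ResidueField.algebraMap_eq,
    (residue_eq_zero_iff _).2 a.2, zero_smul]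

variable [Module R L] [IsScalarTower R A L]

theorem ExtVanishes.of_residueField (h : Module.IsTorsionBySet A L (maximalIdeal A))
    (hk : ExtVanishes R (ResidueField A) X (n + 1)) : ExtVanishes R L X (n + 1) := by
  obtain ⟨κ, ⟨e⟩⟩ := exists_equiv_finsupp_residueField h
  exact (extVanishes_congr_left (e.restrictScalars R)).2 (hk.finsupp κ)

theorem ExtVanishes.residueField_of_nontrivial [Nontrivial L]
    (h : Module.IsTorsionBySet A L (maximalIdeal A)) (hL : ExtVanishes R L X n) :
    ExtVanishes R (ResidueField A) X n := by
  obtain ⟨κ, ⟨e⟩⟩ := exists_equiv_finsupp_residueField h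
  have : Nonempty κ := by
    by_contra hκ
    rw [not_nonempty_iff] at hκ
    exact not_subsingleton L e.toEquiv.subsingleton
  obtain ⟨i⟩ := this
  rw [extVanishes_congr_left (e.restrictScalars R)] at hL
  exact hL.of_retract_left (Finsupp.lsingle i) (Finsupp.lapply i)
    (LinearMap.ext fun x => Finsupp.single_eq_same)

end TorsionByMaximalIdeal

section HomOfResolution

variable {A : Type u} [CommRing A]

theorem IsShortExact.lcomp {B C D N : Type*} [AddCommGroup B] [Module A B] [AddCommGroup C]
    [Module A C] [AddCommGroup D] [Module A D] [AddCommGroup N] [Module A N] {f : B →ₗ[A] C}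
    {g : C →ₗ[A] D} (h : IsShortExact f g) :
    IsShortExact (g.lcomp A N) (f.lcomp A N).rangeRestrict where
  injective := LinearMap.lcomp_injective_of_surjective _ h.surjective
  exact u := Subtype.ext_iff.trans
    (LinearMap.exact_lcomp_of_exact_of_surjective _ h.exact h.surjective u)
  surjective := LinearMap.surjective_rangeRestrict _

variable {R T M X : Type u} [CommRing R] [Algebra R A] [AddCommGroup T] [Module A T]
  [AddCommGroup M] [Module A M] [Module R M] [IsScalarTower R A M] [AddCommGroup X] [Module R X]

theorem ExtVanishes.hom_free {n : ℕ} (h : ExtVanishes R M X (n + 1)) (r : ℕ) :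
    ExtVanishes R ((Fin r → A) →ₗ[A] M) X (n + 1) := by
  let e : ((Fin r → A) →ₗ[A] M) ≃ₗ[A] (ULift.{u} (Fin r) →₀ M) :=
    ((Pi.basisFun A (Fin r)).reindex Equiv.ulift.symm).constr A |>.symm.trans
      (Finsupp.linearEquivFunOnFinite A M _).symm
  exact (extVanishes_congr_left (e.restrictScalars R)).2 (h.finsupp _)

namespace FiniteFreeResolution

variable (F : FiniteFreeResolution A T)

variable (M) in
/-- The cokernel of `Hom(A^(rank i), M) → Hom(syz (i + 1), M)`, a model of `Ext^(i+1)_A(T, M)`. -/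
abbrev HomCokernel (i : ℕ) : Type u :=
  (F.syz (i + 1) →ₗ[A] M) ⧸ LinearMap.range ((F.ι i).lcomp A M)

theorem subsingleton_homCokernel_iff (i : ℕ) :
    Subsingleton (F.HomCokernel M i) ↔ ExtVanishes A T M (i + 1) := by
  rw [Submodule.Quotient.subsingleton_iff, LinearMap.range_eq_top,
    F.extVanishes_succ_iff_surjective]

theorem isTorsionBySet_homCokernel {I : Ideal A} (hT : Module.IsTorsionBySet A T I) (i : ℕ) :
    Module.IsTorsionBySet A (F.HomCokernel M i) I := by
  intro x a
  obtain ⟨u, rfl⟩ := Submodule.mkQ_surjective _ x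
  obtain ⟨g, hg⟩ := F.exists_smul_retraction (fun y => hT (x := y) (a := a)) i
  rw [← map_smul, Submodule.mkQ_apply, Submodule.Quotient.mk_eq_zero]
  refine ⟨u ∘ₗ g, LinearMap.ext fun y => ?_⟩
  change u (g (F.ι i y)) = (a : A) • u y
  rw [hg, map_smul]

variable {i n : ℕ}

theorem extVanishes_hom_of_range (hM : ExtVanishes R M X (n + 1))
    (h : ExtVanishes R (LinearMap.range ((F.ι i).lcomp A M)) X (n + 2)) :
    ExtVanishes R (F.syz i →ₗ[A] M) X (n + 1) :=
  ((F.isShortExact i).lcomp.restrictScalars R).contravariant_extVanishes₁ (hM.hom_free _) h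

theorem extVanishes_range_of_hom (hM : ExtVanishes R M X (n + 1))
    (h : ExtVanishes R (F.syz i →ₗ[A] M) X n) :
    ExtVanishes R (LinearMap.range ((F.ι i).lcomp A M)) X (n + 1) :=
  ((F.isShortExact i).lcomp.restrictScalars R).contravariant_extVanishes₃ h (hM.hom_free _)

theorem isShortExact_homCokernel (i : ℕ) :
    IsShortExact ((LinearMap.range ((F.ι i).lcomp A M)).subtype.restrictScalars R)
      ((LinearMap.range ((F.ι i).lcomp A M)).mkQ.restrictScalars R) :=
  (IsShortExact.mkQ _).restrictScalars R

theorem extVanishes_hom_of_forall_le (hM : ∀ j, ExtVanishes R M X (j + 1))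
    (hT : ∀ l ≤ i, ExtVanishes A T M l) {j : ℕ} (hij : i ≤ j) :
    ExtVanishes R (F.syz i →ₗ[A] M) X j := by
  induction i generalizing j with
  | zero =>
    have := (F.extVanishes_zero_iff_subsingleton M).1 (hT 0 le_rfl)
    exact .of_subsingleton j
  | succ i ih =>
    obtain ⟨j, rfl⟩ := Nat.exists_eq_succ_of_ne_zero (Nat.ne_zero_of_lt hij)
    have hi := ih (fun l hl => hT l (hl.trans i.le_succ)) (Nat.le_of_succ_le_succ hij)
    have := (F.subsingleton_homCokernel_iff (M := M) i).2 (hT _ le_rfl)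
    exact (F.isShortExact_homCokernel i).contravariant_extVanishes₂
      (F.extVanishes_range_of_hom (hM j) hi) (.of_subsingleton _)

end FiniteFreeResolution

end HomOfResolution

theorem forall_gt_of_descending {P : ℕ → Prop} {d m : ℕ} (hd : ∀ j > d, P j)
    (step : ∀ s > m, (∀ j > s, P j) → P s) : ∀ j > m, P j := by
  have key : ∀ t j, d < j + t → m < j → P j := by
    intro t
    induction t with
    | zero => exact fun j hj _ => hd j hj
    | succ t ih => exact fun j _ hmj => step j hmj fun l hl => ih l (by lia) (by lia)
  exact fun j hj => key (d + 1) j (by lia) hj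

section Rigidity

open IsLocalRing

variable {R A T M X : Type u} [CommRing R] [CommRing A] [IsLocalRing A] [Algebra R A]
  [AddCommGroup T] [Module A T] [AddCommGroup M] [Module A M] [Module R M] [IsScalarTower R A M]
  [AddCommGroup X] [Module R X]

namespace FiniteFreeResolution

variable (F : FiniteFreeResolution A T) (hT : Module.IsTorsionBySet A T (maximalIdeal A))
  (hM : ∀ j, ExtVanishes R M X (j + 1))

include hT hM

theorem extVanishes_hom_of_residueField {d s : ℕ}
    (hX : ∀ (N : Type u) [AddCommGroup N] [Module R N], ∀ j > d, ExtVanishes R N X j)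
    (hk : ∀ j > s + 1, ExtVanishes R (ResidueField A) X j) :
    ∀ j > s, ∀ i, ExtVanishes R (F.syz i →ₗ[A] M) X j := by
  refine forall_gt_of_descending (d := d) (fun j hj i => hX _ j hj) fun j hj ih i => ?_
  obtain ⟨j, rfl⟩ := Nat.exists_eq_succ_of_ne_zero (Nat.ne_zero_of_lt hj)
  have hcoker : ExtVanishes R (F.HomCokernel M i) X (j + 3) :=
    .of_residueField (F.isTorsionBySet_homCokernel hT i) (hk _ (by lia))
  exact F.extVanishes_hom_of_range (hM j) <|
    (F.isShortExact_homCokernel i).contravariant_extVanishes₁ (ih _ (by lia) _) hcoker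

theorem extVanishes_residueField_of_not_extVanishes {m s : ℕ} (hms : m < s)
    (hm : ¬ExtVanishes A T M m) (hmin : ∀ l < m, ExtVanishes A T M l)
    (hs : ∀ i, ExtVanishes R (F.syz i →ₗ[A] M) X s) :
    ExtVanishes R (ResidueField A) X s := by
  cases m with
  | zero =>
    rw [F.extVanishes_zero_iff_subsingleton, not_subsingleton_iff_nontrivial] at hm
    refine (hs 0).residueField_of_nontrivial fun u a => LinearMap.ext fun x => ?_
    have hx : (a : A) • x = 0 := F.equiv.injective (by rw [map_smul, hT, map_zero])
    rw [LinearMap.smul_apply, ← map_smul, hx, map_zero, LinearMap.zero_apply]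
  | succ i =>
    obtain ⟨s, rfl⟩ := Nat.exists_eq_add_of_le' (show 2 ≤ s by lia)
    rw [← F.subsingleton_homCokernel_iff, not_subsingleton_iff_nontrivial] at hm
    have hi : ExtVanishes R (F.syz i →ₗ[A] M) X s :=
      F.extVanishes_hom_of_forall_le hM (fun l hl => hmin l (by lia)) (by lia)
    have hcoker := (F.isShortExact_homCokernel i).contravariant_extVanishes₃
      (F.extVanishes_range_of_hom (hM s) hi) (hs (i + 1))
    exact hcoker.residueField_of_nontrivial (F.isTorsionBySet_homCokernel hT i)

end FiniteFreeResolution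

theorem extVanishes_residueField_of_gt [IsNoetherianRing A] {d m : ℕ}
    (hX : ∀ (N : Type u) [AddCommGroup N] [Module R N], ∀ j > d, ExtVanishes R N X j)
    (hM : ∀ j, ExtVanishes R M X (j + 1)) (hm : ¬ExtVanishes A (ResidueField A) M m) :
    ∀ j > m, ExtVanishes R (ResidueField A) X j := by
  classical
  have hex : ∃ m, ¬ExtVanishes A (ResidueField A) M m := ⟨m, hm⟩
  suffices h : ∀ j > Nat.find hex, ExtVanishes R (ResidueField A) X j from
    fun j hj => h j ((Nat.find_min' hex hm).trans_lt hj)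
  obtain ⟨F⟩ := FiniteFreeResolution.nonempty A (ResidueField A)
  refine forall_gt_of_descending (d := d) (fun j hj => hX _ j hj) fun s hs hk => ?_
  obtain ⟨s, rfl⟩ := Nat.exists_eq_succ_of_ne_zero (Nat.ne_zero_of_lt hs)
  exact F.extVanishes_residueField_of_not_extVanishes isTorsionBySet_residueField hM hs
    (Nat.find_spec hex) (fun l hl => not_not.1 (Nat.find_min hex hl))
    (F.extVanishes_hom_of_residueField isTorsionBySet_residueField hM hX hk _ s.lt_succ_self)

end Rigidity

/-! ### Pure-injective modules and localization -/

section PureInjective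

open TensorProduct

variable {R : Type} [CommRing R] {A B C F X : Type} [AddCommGroup A] [Module R A]
  [AddCommGroup B] [Module R B] [AddCommGroup C] [Module R C] [AddCommGroup F] [Module R F]
  [AddCommGroup X] [Module R X] {f : A →ₗ[R] B} {g : B →ₗ[R] C}

theorem baer_of_forall_extVanishes_one
    (h : ∀ (M : Type) [AddCommGroup M] [Module R M], ExtVanishes R M X 1) : Module.Baer R X :=
  fun I u => (IsShortExact.mkQ I).exists_extend (h (R ⧸ I)) u |>.imp fun _ hv x hx =>
    LinearMap.congr_fun hv ⟨x, hx⟩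

theorem IsShortExact.flat_left (h : IsShortExact f g) [Module.Flat R B] [Module.Flat R C] :
    Module.Flat R A :=
  Module.Flat.iff_characterModule_baer.2 <| baer_of_forall_extVanishes_one fun _ _ _ =>
    h.extVanishes_characterModule_shift.1 (.of_injective 1)

theorem IsShortExact.isPureMono [Module.Flat R C] (h : IsShortExact f g) : IsPureMono R f :=
  ⟨h.injective, fun Q _ _ =>
    LinearMap.lTensor_injective_of_exact_of_flat g h.surjective f h.injective h.exact Q⟩

theorem IsShortExact.lTensor (h : IsShortExact f g) (hf : IsPureMono R f) (M : Type)
    [AddCommGroup M] [Module R M] : IsShortExact (f.lTensor M) (g.lTensor M) :=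
  ⟨hf.2 M, lTensor_exact M h.exact h.surjective, LinearMap.lTensor_surjective M h.surjective⟩

theorem IsShortExact.rTensor (h : IsShortExact f g) (M : Type) [AddCommGroup M] [Module R M]
    [Module.Flat R M] : IsShortExact (f.rTensor M) (g.rTensor M) :=
  ⟨Module.Flat.rTensor_preserves_injective_linearMap f h.injective,
    rTensor_exact M h.exact h.surjective, LinearMap.rTensor_surjective M h.surjective⟩

theorem IsPureMono.lTensor (hf : IsPureMono R f) (M : Type) [AddCommGroup M] [Module R M] :
    IsPureMono R (f.lTensor M) := by
  refine ⟨hf.2 M, fun Q _ _ => ?_⟩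
  have h := hf.2 (Q ⊗[R] M)
  rw [LinearMap.lTensor_tensor] at h
  simpa using h

namespace PureInjective

variable (hX : PureInjective R X)
include hX

theorem extVanishes_of_flat [Module.Flat R F] (j : ℕ) : ExtVanishes R F X (j + 1) := by
  induction j generalizing F with
  | zero =>
    have h := isShortExact_syzygy R F
    exact h.extVanishes_one_iff_exists_extend.2 (hX _ _ _ h.isPureMono)
  | succ j ih =>
    have : Module.Flat R (Syzygy R F) := (isShortExact_syzygy R F).flat_left
    exact (isShortExact_syzygy R F).extVanishes_shift_left.2 ih

theorem extVanishes_tensor_succ [Module.Flat R B] [Module.Flat R F] (h : IsShortExact f g) {j : ℕ}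
    (hA : ExtVanishes R (A ⊗[R] F) X (j + 1)) : ExtVanishes R (C ⊗[R] F) X (j + 2) :=
  (h.rTensor F).contravariant_extVanishes₃ hA (hX.extVanishes_of_flat _)

theorem extVanishes_tensor_of_flat [Module.Flat R F] {M : Type} [AddCommGroup M] [Module R M]
    (hM : ∀ j, ExtVanishes R M X (j + 1)) (j : ℕ) : ExtVanishes R (M ⊗[R] F) X (j + 1) := by
  classical
  induction j generalizing M with
  | zero =>
    have h := isShortExact_syzygy R F
    refine (h.lTensor h.isPureMono M).extVanishes_one_of_exists_extend ?_
      (hX _ _ _ (h.isPureMono.lTensor M))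
    exact (extVanishes_congr_left (TensorProduct.finsuppRight R R M R F ≪≫ₗ
      Finsupp.mapRange.linearEquiv (TensorProduct.rid R M))).2 (.finsupp F (hM 0))
  | succ j ih =>
    have h := isShortExact_syzygy R M
    have hsyz : ∀ i, ExtVanishes R (Syzygy R M) X (i + 1) :=
      fun i => h.extVanishes_shift_left.1 (hM (i + 1))
    have hA := ih hsyz
    exact hX.extVanishes_tensor_succ h hA

theorem extVanishes_localizedModule (S : Submonoid R) {M : Type} [AddCommGroup M] [Module R M]
    (hM : ∀ j, ExtVanishes R M X (j + 1)) (j : ℕ) :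
    ExtVanishes R (LocalizedModule S M) X (j + 1) := by
  have hflat : Module.Flat R (Localization S) := IsLocalization.flat (Localization S) S
  let e : LocalizedModule S M ≃ₗ[R] M ⊗[R] Localization S :=
    (LocalizedModule.equivTensorProduct S M).restrictScalars R ≪≫ₗ TensorProduct.comm R _ _
  exact (extVanishes_congr_left e).2 (hX.extVanishes_tensor_of_flat hM j)

end PureInjective

end PureInjective

/-! ### Local depth, associated primes and injective envelopes -/

section LocalExt

open IsLocalRing

theorem exists_not_extVanishes_residueField_self (A : Type) [CommRing A] [IsLocalRing A]
    [IsNoetherianRing A] : ∃ i, ¬ExtVanishes A (ResidueField A) A i := by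
  by_contra! hvanish
  set d := (LTSeries.longestOf (PrimeSpectrum A)).length
  have hd : ringKrullDim A = d := Order.krullDim_eq_length_of_finiteDimensionalOrder
  have hsupp : Module.support A (ResidueField A) = PrimeSpectrum.zeroLocus (maximalIdeal A) := by
    rw [Module.support_eq_zeroLocus]
    exact congrArg _ (congrArg _ Ideal.annihilator_quotient)
  have hlt : maximalIdeal A • (⊤ : Submodule A A) < ⊤ := by
    simpa using (IsLocalRing.maximalIdeal.isMaximal A).ne_top.lt_top
  obtain ⟨rs, hlen, -, hreg⟩ := ModuleCat.exists_isRegular_of_exists_subsingleton_ext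
    (maximalIdeal A) (d + 1) (ModuleCat.of A A) hlt (ModuleCat.of A (ResidueField A)) hsupp
    fun i _ => hvanish i
  have hdim := ringKrullDim_add_length_eq_ringKrullDim_of_isRegular rs hreg
  have : Nontrivial (A ⧸ Ideal.ofList rs) := by
    simpa [Submodule.Quotient.nontrivial_iff, eq_comm] using hreg.top_ne_smul
  have hle : (d + 1 : WithBot ℕ∞) ≤ d := calc
    (d + 1 : WithBot ℕ∞) ≤ ringKrullDim (A ⧸ Ideal.ofList rs) + (d + 1) :=
      le_add_of_nonneg_left ringKrullDim_nonneg_of_nontrivial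
    _ = d := by simpa [hlen, hd] using hdim
  exact (Nat.lt_succ_self d).not_ge (by exact_mod_cast hle)

theorem le_rdepth_iff {A : Type} [CommRing A] [IsLocalRing A] {M : Type} [AddCommGroup M]
    [Module A M] {n : ℕ} :
    (n : ℕ∞) ≤ rdepth A M ↔ ∀ i < n, ExtVanishes A (ResidueField A) M i := by
  simp only [rdepth, le_sInf_iff, Set.mem_ofPred_eq, forall_exists_index, and_imp,
    extV_iff]
  refine ⟨fun h i hi => of_not_not fun hc => ?_, ?_⟩
  · exact (Nat.cast_le.1 (h _ i rfl hc)).not_gt hi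
  · rintro h _ i rfl hi
    exact Nat.cast_le.2 (not_lt.1 fun hlt => hi (h i hlt))

variable {R : Type} [CommRing R] (p : PrimeSpectrum R)

/-- Vanishing of the `i`-th Ext group over `R_p` from the residue field of `R_p` to `M_p`; these
groups govern `depth_{R_p}(M_p)`. -/
def LocalExtVanishes (M : Type) [AddCommGroup M] [Module R M] (i : ℕ) : Prop :=
  ExtVanishes (Localization.AtPrime p.asIdeal) (ResidueField (Localization.AtPrime p.asIdeal))
    (LocalizedModule p.asIdeal.primeCompl M) i

variable {p} {A B C M : Type} [AddCommGroup A] [Module R A] [AddCommGroup B] [Module R B]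
  [AddCommGroup C] [Module R C] [AddCommGroup M] [Module R M] {f : A →ₗ[R] B} {g : B →ₗ[R] C}
  {n : ℕ}

theorem le_depthAt_iff : (n : ℕ∞) ≤ depthAt R p M ↔ ∀ i < n, LocalExtVanishes p M i :=
  le_rdepth_iff

theorem localExtVanishes_congr (e : A ≃ₗ[R] B) : LocalExtVanishes p A n ↔ LocalExtVanishes p B n :=
  extVanishes_congr_right
    (IsLocalizedModule.mapEquiv p.asIdeal.primeCompl
      (LocalizedModule.mkLinearMap p.asIdeal.primeCompl A)
      (LocalizedModule.mkLinearMap p.asIdeal.primeCompl B) (Localization.AtPrime p.asIdeal) e)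

theorem PureInjective.extVanishes_residueField_of_not_localExtVanishes [IsNoetherianRing R]
    {X : Type} [AddCommGroup X] [Module R X] (hX : PureInjective R X) {d m : ℕ}
    (hd : ∀ (N : Type) [AddCommGroup N] [Module R N], ∀ j > d, ExtVanishes R N X j)
    (hM : ∀ j, ExtVanishes R M X (j + 1)) (hm : ¬LocalExtVanishes p M m) :
    ∀ j > m, ExtVanishes R (ResidueField (Localization.AtPrime p.asIdeal)) X j :=
  extVanishes_residueField_of_gt hd (hX.extVanishes_localizedModule _ hM) hm

theorem exists_not_localExtVanishes_self [IsNoetherianRing R] : ∃ i, ¬LocalExtVanishes p R i :=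
  have : IsNoetherianRing (Localization.AtPrime p.asIdeal) :=
    IsLocalization.isNoetherianRing p.asIdeal.primeCompl _ inferInstance
  exists_not_extVanishes_residueField_self (Localization.AtPrime p.asIdeal)

theorem LocalExtVanishes.of_injective [IsNoetherianRing R] [Module.Injective R M] (n : ℕ) :
    LocalExtVanishes p M (n + 1) :=
  have : Module.Injective (Localization.AtPrime p.asIdeal)
      (LocalizedModule p.asIdeal.primeCompl M) :=
    Module.injective_of_isLocalizedModule p.asIdeal.primeCompl
      (LocalizedModule.mkLinearMap p.asIdeal.primeCompl M)
  ExtVanishes.of_injective n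

theorem IsShortExact.localizedModule (h : IsShortExact f g) (S : Submonoid R) :
    IsShortExact (LocalizedModule.map S f) (LocalizedModule.map S g) :=
  ⟨LocalizedModule.map_injective S f h.injective, LocalizedModule.map_exact S f g h.exact,
    LocalizedModule.map_surjective S g h.surjective⟩

theorem extVanishes_residueField_zero_iff (A : Type) [CommRing A] [IsLocalRing A]
    [IsNoetherianRing A] (M : Type) [AddCommGroup M] [Module A M] :
    ExtVanishes A (ResidueField A) M 0 ↔ maximalIdeal A ∉ associatedPrimes A M := by
  have : IsSimpleModule A (ResidueField A) :=
    isSimpleModule_iff_quot_maximal.2 ⟨_, inferInstance, ⟨.refl A _⟩⟩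
  rw [extVanishes_zero_iff, AssociatedPrimes.mem_iff,
    isAssociatedPrime_iff_exists_injective_linearMap]
  refine ⟨fun h ⟨_, u, hu⟩ => ?_, fun h => subsingleton_of_forall_eq 0 fun u => ?_⟩
  · exact one_ne_zero (hu ((LinearMap.congr_fun (h.elim u 0) 1).trans (map_zero u).symm))
  · exact u.injective_or_eq_zero.resolve_left fun hu => h ⟨inferInstance, u, hu⟩

open Module.associatedPrimes in
theorem localExtVanishes_zero_iff [IsNoetherianRing R] :
    LocalExtVanishes p M 0 ↔ p.asIdeal ∉ associatedPrimes R M := by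
  have : IsNoetherianRing (Localization.AtPrime p.asIdeal) :=
    IsLocalization.isNoetherianRing p.asIdeal.primeCompl _ inferInstance
  rw [LocalExtVanishes, extVanishes_residueField_zero_iff,
    ← preimage_comap_associatedPrimes_eq_associatedPrimes_of_isLocalizedModule
      p.asIdeal.primeCompl _ (LocalizedModule.mkLinearMap p.asIdeal.primeCompl M)]
  have hcomap : Ideal.comap (algebraMap R (Localization.AtPrime p.asIdeal))
      (maximalIdeal (Localization.AtPrime p.asIdeal)) = p.asIdeal :=
    Localization.AtPrime.under_maximalIdeal
  rw [Set.mem_preimage, hcomap]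

end LocalExt

section InjectiveEnvelope

variable {R : Type} [CommRing R] {p : PrimeSpectrum R}
  {A B C M : Type} [AddCommGroup A] [Module R A] [AddCommGroup B] [Module R B]
  [AddCommGroup C] [Module R C] [AddCommGroup M] [Module R M] {f : A →ₗ[R] B} {g : B →ₗ[R] C}

theorem exists_smul_eq_mkLinearMap_of_smul_eq_zero [IsNoetherianRing R]
    {y : LocalizedModule p.asIdeal.primeCompl M} (hy : ∀ a ∈ p.asIdeal, a • y = 0) :
    ∃ z : M, (∀ a ∈ p.asIdeal, a • z = 0) ∧ ∃ s ∈ p.asIdeal.primeCompl,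
      s • y = LocalizedModule.mkLinearMap p.asIdeal.primeCompl M z := by
  let ι := LocalizedModule.mkLinearMap p.asIdeal.primeCompl M
  obtain ⟨⟨m, s⟩, hms : s • y = ι m⟩ := IsLocalizedModule.surj p.asIdeal.primeCompl ι y
  have hker : ι ∘ₗ LinearMap.toSpanSingleton R M m ∘ₗ p.asIdeal.subtype = ι ∘ₗ 0 := by
    ext a
    simp [← hms, smul_comm _ s, hy a a.2]
  obtain ⟨t, ht⟩ := Module.Finite.exists_smul_of_comp_eq_of_isLocalizedModule
    p.asIdeal.primeCompl ι _ _ hker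
  refine ⟨t • m, fun a ha => ?_, t * s, (t * s).2, ?_⟩
  · simpa [smul_comm a t] using LinearMap.congr_fun ht ⟨a, ha⟩
  · rw [mul_smul, ← Submonoid.smul_def s, hms, Submonoid.smul_def t, map_smul]

theorem IsInjectiveEnvelope.exists_smul_eq (hf : IsInjectiveEnvelope R f) {x : B} (hx : x ≠ 0) :
    ∃ (r : R) (m : A), r • x = f m ∧ f m ≠ 0 := by
  obtain ⟨_, ⟨hy, m, rfl⟩, hm⟩ :=
    (Submodule.ne_bot_iff _).1 (hf.2.2 (R ∙ x) (by simpa using hx))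
  obtain ⟨r, hr⟩ := Submodule.mem_span_singleton.1 hy
  exact ⟨r, m, hr, hm⟩

theorem IsInjectiveEnvelope.localizedModule_map_eq_zero [IsNoetherianRing R]
    (hf : IsInjectiveEnvelope R f) (hfg : Function.Exact f g)
    {y : LocalizedModule p.asIdeal.primeCompl B} (hy : ∀ a ∈ p.asIdeal, a • y = 0) :
    LocalizedModule.map p.asIdeal.primeCompl g y = 0 := by
  obtain ⟨z, hz, s, hs, hsy⟩ := exists_smul_eq_mkLinearMap_of_smul_eq_zero hy
  suffices h : ∃ r ∈ p.asIdeal.primeCompl, r • g z = 0 by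
    obtain ⟨r, hr, hrz⟩ := h
    refine IsLocalizedModule.smul_injective
      (LocalizedModule.mkLinearMap p.asIdeal.primeCompl C) (⟨r * s, mul_mem hr hs⟩) ?_
    have hgz : s • LocalizedModule.map p.asIdeal.primeCompl g y =
        LocalizedModule.mkLinearMap p.asIdeal.primeCompl C (g z) := by
      rw [← LinearMap.map_smul_of_tower, hsy]
      exact IsLocalizedModule.map_apply ..
    simp only [Submonoid.smul_def, mul_smul, hgz, ← map_smul, hrz, map_zero, smul_zero]
  by_cases hz0 : z = 0
  · exact ⟨1, one_mem _, by rw [hz0, map_zero, smul_zero]⟩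
  obtain ⟨r, m, hrz, hm⟩ := hf.exists_smul_eq hz0
  exact ⟨r, fun hr => hm (hrz.symm.trans (hz r hr)),
    by rw [← map_smul, hrz, hfg.apply_apply_eq_zero]⟩

theorem IsInjectiveEnvelope.localExtVanishes_shift [IsNoetherianRing R]
    (hf : IsInjectiveEnvelope R f) (h : IsShortExact f g) (n : ℕ) :
    LocalExtVanishes p C n ↔ LocalExtVanishes p A (n + 1) := by
  have := hf.1
  have hloc := h.localizedModule p.asIdeal.primeCompl
  have hB : ∀ n, LocalExtVanishes p B (n + 1) := LocalExtVanishes.of_injective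
  refine ⟨fun hC => hloc.covariant_extVanishes₁ hC (hB n), fun hA => ?_⟩
  cases n with
  | succ n => exact hloc.covariant_extVanishes₃ (hB n) hA
  | zero =>
    refine extVanishes_zero_iff.2 (subsingleton_of_forall_eq 0 fun u => ?_)
    obtain ⟨v, rfl⟩ := hloc.exists_lift hA u
    refine LinearMap.ext fun w => hf.localizedModule_map_eq_zero h.exact fun a ha => ?_
    have haw : algebraMap R (Localization.AtPrime p.asIdeal) a • w = 0 :=
      isTorsionBySet_residueField (x := w)
        (a := ⟨_, (IsLocalization.AtPrime.to_map_mem_maximal_iff _ p.asIdeal a).2 ha⟩)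
    rw [← algebraMap_smul (Localization.AtPrime p.asIdeal) a (v w), ← map_smul, haw, map_zero]

end InjectiveEnvelope

section EssentialExtension

variable {R I : Type*} [Ring R] [AddCommGroup I] [Module R I] {K L M N : Submodule R I}

/-- `K` meets `M` nontrivially under every nonzero element: if moreover `M ≤ K`, then `K` is an
essential extension of `M`. -/
def IsEssentialIn (M K : Submodule R I) : Prop :=
  ∀ x ∈ K, x ≠ 0 → ∃ r : R, r • x ∈ M ∧ r • x ≠ 0

theorem isEssentialIn_self (M : Submodule R I) : IsEssentialIn M M :=
  fun x hx hx0 => ⟨1, by rwa [one_smul], by rwa [one_smul]⟩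

theorem IsEssentialIn.trans (hMK : IsEssentialIn M K) (hKN : IsEssentialIn K N) :
    IsEssentialIn M N := fun x hx hx0 => by
  obtain ⟨r, hrK, hr0⟩ := hKN x hx hx0
  obtain ⟨t, htM, ht0⟩ := hMK _ hrK hr0
  exact ⟨t * r, by rwa [mul_smul], by rwa [mul_smul]⟩

theorem exists_maximal_isEssentialIn (M : Submodule R I) :
    ∃ K, M ≤ K ∧ Maximal (IsEssentialIn M) K := by
  refine zorn_le_nonempty₀ {K | IsEssentialIn M K} (fun c hc hchain y hy =>
    ⟨sSup c, fun x hx hx0 => ?_, fun _ => le_sSup⟩) M (isEssentialIn_self M)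
  obtain ⟨z, hz, hxz⟩ := (Submodule.mem_sSup_of_directed ⟨y, hy⟩ hchain.directedOn).1 hx
  exact hc hz x hxz hx0

theorem exists_maximal_disjoint (K : Submodule R I) : ∃ L, Maximal (Disjoint · K) L := by
  obtain ⟨L, -, hL⟩ := zorn_le_nonempty₀ {L | Disjoint L K} (fun c hc hchain _ _ =>
    ⟨sSup c, (DirectedOn.disjoint_sSup_left hchain.directedOn).2 fun _ hb => hc hb,
      fun _ => le_sSup⟩) ⊥ disjoint_bot_left
  exact ⟨L, hL⟩

theorem exists_smul_sub_mem_of_maximal_disjoint (hL : Maximal (Disjoint · K) L) {x : I}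
    (hx : x ∉ L) : ∃ (r : R) (k : I), k ∈ K ∧ k ≠ 0 ∧ r • x - k ∈ L := by
  have hmeet : ¬Disjoint (L ⊔ R ∙ x) K := fun h =>
    hx (hL.le_of_ge h le_sup_left
      ((le_sup_right : _ ≤ L ⊔ R ∙ x) (Submodule.mem_span_singleton_self x)))
  rw [Submodule.disjoint_def] at hmeet
  push Not at hmeet
  obtain ⟨_, hk, hkK, hk0⟩ := hmeet
  obtain ⟨l, hl, _, hy, rfl⟩ := Submodule.mem_sup.1 hk
  obtain ⟨r, rfl⟩ := Submodule.mem_span_singleton.1 hy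
  exact ⟨r, _, hkK, hk0, by simpa using L.neg_mem hl⟩

end EssentialExtension

section InjectiveHull

variable {R I : Type u} [Ring R] [AddCommGroup I] [Module R I] {K L M : Submodule R I}

theorem exists_extend_subtype_of_disjoint [Module.Injective R I] (hKL : Disjoint L K) :
    ∃ r : I →ₗ[R] I, (∀ k ∈ K, r k = k) ∧ ∀ l ∈ L, r l = 0 := by
  have hinj : Function.Injective (L.mkQ ∘ₗ K.subtype) := by
    refine (injective_iff_map_eq_zero _).2 fun k hk => Subtype.ext ?_
    exact Submodule.disjoint_def.1 hKL k (by simpa using hk) k.2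
  obtain ⟨h, hh⟩ := Module.Injective.out (L.mkQ ∘ₗ K.subtype) hinj K.subtype
  refine ⟨h ∘ₗ L.mkQ, fun k hk => hh ⟨k, hk⟩, fun l hl => ?_⟩
  rw [LinearMap.comp_apply, Submodule.mkQ_apply, (Submodule.Quotient.mk_eq_zero L).2 hl, map_zero]

theorem isEssentialIn_range (hL : Maximal (Disjoint · K) L) {r : I →ₗ[R] I}
    (hrK : ∀ k ∈ K, r k = k) (hrL : ∀ l ∈ L, r l = 0) : IsEssentialIn K (LinearMap.range r) := by
  rintro _ ⟨x, rfl⟩ hx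
  obtain ⟨a, k, hk, hk0, hak⟩ :=
    exists_smul_sub_mem_of_maximal_disjoint hL fun hxL => hx (hrL x hxL)
  have hax : a • r x = k := by
    simpa [hrK k hk, sub_eq_zero] using hrL _ hak
  exact ⟨a, hax ▸ hk, hax ▸ hk0⟩

-- A maximal essential extension inside an injective module is a direct summand: projecting along a
-- maximal complement `L` has image essential over `M`, hence contained in `K`.
theorem injective_of_maximal_isEssentialIn [Module.Injective R I]
    (hK : Maximal (IsEssentialIn M) K) : Module.Injective R K := by
  obtain ⟨L, hL⟩ := exists_maximal_disjoint K
  obtain ⟨r, hrK, hrL⟩ := exists_extend_subtype_of_disjoint hL.prop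
  have hrange : ∀ x, r x ∈ K := fun x =>
    hK.le_of_ge (hK.prop.trans (isEssentialIn_range hL hrK hrL)) (fun k hk => ⟨k, hrK k hk⟩)
      ⟨x, rfl⟩
  refine ⟨fun X Y _ _ _ _ f hf g => ?_⟩
  obtain ⟨h, hh⟩ := Module.Injective.out f hf (K.subtype ∘ₗ g)
  exact ⟨r.codRestrict K hrange ∘ₗ h, fun x => Subtype.ext <| by
    simpa [hh x] using hrK (g x) (g x).2⟩

end InjectiveHull

section Cosyzygy

variable {R : Type} [CommRing R] {M : Type} [AddCommGroup M] [Module R M]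

theorem exists_submodule_isInjectiveEnvelope {R : Type} [Ring R] {M I : Type} [AddCommGroup M]
    [Module R M] [AddCommGroup I] [Module R I] [Module.Injective R I] {f : M →ₗ[R] I}
    (hf : Function.Injective f) :
    ∃ (K : Submodule R I) (hfK : ∀ m, f m ∈ K), IsInjectiveEnvelope R (f.codRestrict K hfK) := by
  obtain ⟨K, hMK, hK⟩ := exists_maximal_isEssentialIn (LinearMap.range f)
  refine ⟨K, fun m => hMK ⟨m, rfl⟩, injective_of_maximal_isEssentialIn hK,
    fun x y h => hf (congrArg Subtype.val h), fun N hN => ?_⟩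
  obtain ⟨x, hx, hx0⟩ := (Submodule.ne_bot_iff _).1 hN
  obtain ⟨r, ⟨m, hm⟩, hr⟩ := hK.prop x x.2 fun h => hx0 (Subtype.ext h)
  exact (Submodule.ne_bot_iff _).2
    ⟨r • x, ⟨N.smul_mem r hx, m, Subtype.ext hm⟩, fun h => hr (congrArg Subtype.val h)⟩

theorem exists_isInjectiveEnvelope (R : Type) [Ring R] (M : Type) [AddCommGroup M] [Module R M] :
    ∃ (E : Type) (_ : AddCommGroup E) (_ : Module R E) (f : M →ₗ[R] E),
      IsInjectiveEnvelope R f := by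
  obtain ⟨I, _, _, f, _, hf⟩ := exists_injective_embedding R M
  obtain ⟨K, _, hK⟩ := exists_submodule_isInjectiveEnvelope hf
  exact ⟨K, _, _, _, hK⟩

theorem nonempty_cosyzygySeq (R : Type) [CommRing R] (M : Type) [AddCommGroup M] [Module R M] :
    Nonempty (CosyzygySeq R M) := by
  choose E i j f hf using fun N : ModuleCat.{0} R => exists_isInjectiveEnvelope R N
  let C : ℕ → ModuleCat.{0} R := fun n =>
    n.rec (.of R M) fun _ N => .of R (E N ⧸ LinearMap.range (f N))
  exact ⟨{
    C := C
    iso0 := .refl R M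
    E := fun n => .of R (E (C n))
    emb := fun n => f (C n)
    env := fun n => hf (C n)
    isoSucc := fun n => LinearEquiv.refl R (C (n + 1)) }⟩

variable [IsNoetherianRing R] {p : PrimeSpectrum R}

theorem CosyzygySeq.localExtVanishes_iff (s : CosyzygySeq R M) (n i : ℕ) :
    LocalExtVanishes p (s.C n) i ↔ LocalExtVanishes p M (n + i) := by
  induction n generalizing i with
  | zero => rw [zero_add, localExtVanishes_congr s.iso0]
  | succ n ih =>
    rw [localExtVanishes_congr (s.isoSucc n),
      (s.env n).localExtVanishes_shift (.range_mkQ (s.env n).2.1), ih, Nat.add_right_comm,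
      add_assoc]

theorem CosyzygySeq.mem_associatedPrimes_iff (s : CosyzygySeq R M) (n : ℕ) :
    p.asIdeal ∈ associatedPrimes R (s.C n) ↔ ¬LocalExtVanishes p M n := by
  rw [← not_iff_not, not_not, ← localExtVanishes_zero_iff, s.localExtVanishes_iff, add_zero]

end Cosyzygy

/-! ### Eklof's lemma and injective modules over noetherian rings -/

section Eklof

variable {R : Type u} [CommRing R] {A B C M N I X : Type u} [AddCommGroup A] [Module R A]
  [AddCommGroup B] [Module R B] [AddCommGroup C] [Module R C] [AddCommGroup M] [Module R M]
  [AddCommGroup N] [Module R N] [AddCommGroup I] [Module R I] [AddCommGroup X] [Module R X]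
  {f : A →ₗ[R] B} {g : B →ₗ[R] C} {ι : X →ₗ[R] I} {π : I →ₗ[R] N}

theorem IsShortExact.exists_diagonal [Module.Injective R I] (h : IsShortExact f g)
    (hX : IsShortExact ι π) (hC : ExtVanishes R C X 1) {u : B →ₗ[R] N} {v : A →ₗ[R] I}
    (huv : π ∘ₗ v = u ∘ₗ f) : ∃ w : B →ₗ[R] I, π ∘ₗ w = u ∧ w ∘ₗ f = v := by
  obtain ⟨w₀, hw₀⟩ := Module.Injective.extension_property R _ _ _ f h.injective v
  obtain ⟨e, he⟩ := (LinearMap.exact_lcomp_of_exact_of_surjective N h.exact h.surjective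
    (u - π ∘ₗ w₀)).1 (by
      rw [LinearMap.lcomp_apply', LinearMap.sub_comp, LinearMap.comp_assoc, hw₀, huv, sub_self])
  obtain ⟨w₁, rfl⟩ := hX.exists_lift hC e
  refine ⟨w₀ + w₁ ∘ₗ g, ?_, ?_⟩
  · rw [LinearMap.comp_add, ← eq_sub_iff_add_eq']
    rw [← LinearMap.comp_assoc]
    exact he
  · rw [LinearMap.add_comp, LinearMap.comp_assoc, h.comp_eq_zero, LinearMap.comp_zero, add_zero,
      hw₀]

theorem isShortExact_comap_mkQ (K : Submodule R M) (Q : Submodule R (M ⧸ K)) :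
    IsShortExact (Submodule.inclusion (K.le_comap_mkQ Q))
      (K.mkQ.restrict fun _ => id : Q.comap K.mkQ →ₗ[R] Q) := by
  refine ⟨Submodule.inclusion_injective _, fun x => ?_, ?_⟩
  · rw [← LinearMap.coe_range, SetLike.mem_coe, Submodule.range_inclusion, Submodule.mem_comap,
      ← Submodule.coe_eq_zero]
    exact Submodule.Quotient.mk_eq_zero K
  · rintro ⟨y, hy⟩
    obtain ⟨x, rfl⟩ := K.mkQ_surjective y
    exact ⟨⟨x, hy⟩, rfl⟩

theorem extVanishes_one_of_filtration (𝒮 : Set (Submodule R M)) (hbot : ⊥ ∈ 𝒮)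
    (hsup : ∀ c ⊆ 𝒮, c.Nonempty → DirectedOn (· ≤ ·) c → sSup c ∈ 𝒮)
    (hstep : ∀ K ∈ 𝒮, K ≠ ⊤ → ∃ Q : Submodule R (M ⧸ K),
      Q ≠ ⊥ ∧ Q.comap K.mkQ ∈ 𝒮 ∧ ExtVanishes R Q X 1) : ExtVanishes R M X 1 := by
  obtain ⟨I, _, _, ι, _, hι⟩ := exists_injective_embedding R X
  have hX := IsShortExact.range_mkQ hι
  rw [hX.extVanishes_one_iff_exists_lift]
  intro u
  set π := (LinearMap.range ι).mkQ
  let lifts : Set (M →ₗ.[R] I) := {v | v.domain ∈ 𝒮 ∧ π ∘ₗ v.toFun = u ∘ₗ v.domain.subtype}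
  have hlifts : ∀ c ⊆ lifts, IsChain (· ≤ ·) c → ∀ y ∈ c, ∃ ub ∈ lifts, ∀ z ∈ c, z ≤ ub := by
    intro c hc hchain y hy
    have hdir : DirectedOn (· ≤ ·) c := hchain.directedOn
    refine ⟨LinearPMap.sSup c hdir, ⟨hsup _ (Set.image_subset_iff.2 fun z hz => (hc hz).1)
      ⟨_, y, hy, rfl⟩ (hdir.mono_comp fun _ _ h => h.1), ?_⟩, fun z => LinearPMap.le_sSup hdir⟩
    ext ⟨x, hx⟩
    obtain ⟨z, hz, hxz⟩ := (LinearPMap.mem_domain_sSup_iff ⟨y, hy⟩ hdir).1 hx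
    have hzx := (LinearPMap.le_sSup hdir hz).2 (x := ⟨x, hxz⟩) (y := ⟨x, hx⟩) rfl
    exact (congrArg π hzx.symm).trans (LinearMap.congr_fun (hc hz).2 ⟨x, hxz⟩)
  obtain ⟨v, -, hv⟩ := zorn_le_nonempty₀ lifts hlifts ⊥ ⟨hbot, by
    ext ⟨x, hx⟩
    obtain rfl : x = 0 := hx
    exact (map_zero (π ∘ₗ _)).trans (map_zero _).symm⟩
  have htop : v.domain = ⊤ := by
    by_contra hne
    obtain ⟨Q, hQ, hQS, hQX⟩ := hstep _ hv.prop.1 hne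
    obtain ⟨w, hwu, hwv⟩ := (isShortExact_comap_mkQ v.domain Q).exists_diagonal hX hQX
      (u := u ∘ₗ (Q.comap v.domain.mkQ).subtype) (v := v.toFun) hv.prop.2
    have hle : v ≤ ⟨Q.comap v.domain.mkQ, w⟩ := by
      refine ⟨v.domain.le_comap_mkQ Q, fun {x y} hxy => ?_⟩
      exact (LinearMap.congr_fun hwv x).symm.trans (congrArg w (Subtype.ext hxy))
    have := (hv.le_of_ge (y := ⟨_, w⟩) ⟨hQS, hwu⟩ hle).1
    exact hQ ((Submodule.eq_bot_iff Q).2 fun y hy => by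
      obtain ⟨x, rfl⟩ := v.domain.mkQ_surjective y
      exact (Submodule.Quotient.mk_eq_zero _).2 (this hy))
  exact ⟨v.toFun ∘ₗ LinearMap.codRestrict v.domain LinearMap.id fun _ => htop ▸ trivial,
    LinearMap.ext fun _ => LinearMap.congr_fun hv.prop.2 ⟨_, _⟩⟩

end Eklof

section ResidueField

variable {R : Type} [CommRing R] {p : PrimeSpectrum R} {E N X : Type} [AddCommGroup E]
  [Module R E] [AddCommGroup N] [Module R N] [AddCommGroup X] [Module R X]

theorem exists_injective_resField (hN : ∀ s : p.asIdeal.primeCompl,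
    IsUnit (algebraMap R (Module.End R N) s)) {f : R ⧸ p.asIdeal →ₗ[R] N}
    (hf : Function.Injective f) :
    ∃ g : resField R p →ₗ[R] N,
      Function.Injective g ∧ g ∘ₗ LocalizedModule.mkLinearMap _ _ = f := by
  refine ⟨LocalizedModule.lift _ f hN, (injective_iff_map_eq_zero _).2 fun x hx => ?_,
    LocalizedModule.lift_comp _ f hN⟩
  induction x using LocalizedModule.induction_on with
  | _ m s =>
    have hms : LocalizedModule.mkLinearMap p.asIdeal.primeCompl _ m =
        (s : R) • LocalizedModule.mk m s := by
      rw [LocalizedModule.mkLinearMap_apply, LocalizedModule.smul'_mk, ← Submonoid.smul_def,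
        LocalizedModule.mk_cancel]
    have hm : f m = 0 := by
      rw [← LocalizedModule.lift_comp _ f hN, LinearMap.comp_apply, hms, map_smul, hx, smul_zero]
    rw [(map_eq_zero_iff f hf).1 hm, LocalizedModule.zero_mk]

theorem exists_injective_quotient_of_smul_injective [IsNoetherianRing R] [Nontrivial N]
    (hN : ∀ s ∉ p.asIdeal, ∀ x : N, s • x = 0 → x = 0)
    (hp : ∀ a ∈ p.asIdeal, ∀ x : N, ∃ n : ℕ, a ^ n • x = 0) :
    ∃ f : R ⧸ p.asIdeal →ₗ[R] N, Function.Injective f := by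
  obtain ⟨P, hP⟩ := associatedPrimes.nonempty R N
  obtain ⟨hPprime, f, hf⟩ := (isAssociatedPrime_iff_exists_injective_linearMap _ _).1 hP
  have hsmul (a : R) : a • f 1 = 0 ↔ a ∈ P := by
    rw [← map_smul, map_eq_zero_iff f hf, ← Ideal.Quotient.eq_zero_iff_mem, Algebra.smul_def,
      mul_one, Ideal.Quotient.algebraMap_eq]
  have hPp : P = p.asIdeal := by
    refine le_antisymm (fun a ha => by_contra fun hap => ?_) fun a ha => ?_
    · exact hPprime.one_notMem ((hsmul 1).1 (by rw [hN a hap _ ((hsmul a).2 ha), smul_zero]))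
    · obtain ⟨n, hn⟩ := hp a ha (f 1)
      exact hPprime.mem_of_pow_mem n ((hsmul _).1 hn)
  exact hPp ▸ ⟨f, hf⟩

theorem extVanishes_one_of_residueField [IsNoetherianRing R]
    (hs : ∀ s : p.asIdeal.primeCompl, IsUnit (algebraMap R (Module.End R E) s))
    (hp : ∀ a ∈ p.asIdeal, ∀ x : E, ∃ n : ℕ, a ^ n • x = 0)
    (hX : ExtVanishes R (resField R p) X 1) : ExtVanishes R E X 1 := by
  have hbij (s : p.asIdeal.primeCompl) := (Module.End.isUnit_iff _).1 (hs s)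
  refine extVanishes_one_of_filtration {K | ∀ s : p.asIdeal.primeCompl, ∀ x, s • x ∈ K → x ∈ K}
    (fun s x hx => (hbij s).1 (hx.trans (map_zero _).symm)) (fun c hc hne hdir s x hx => ?_)
    fun K hK hKtop => ?_
  · obtain ⟨K, hK, hxK⟩ := (Submodule.mem_sSup_of_directed hne hdir).1 hx
    exact (Submodule.mem_sSup_of_directed hne hdir).2 ⟨K, hK, hc hK s x hxK⟩
  have : Nontrivial (E ⧸ K) := Submodule.Quotient.nontrivial_iff.2 hKtop
  have hinj (s : p.asIdeal.primeCompl) (y : E ⧸ K) (hy : s • y = 0) : y = 0 := by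
    obtain ⟨x, rfl⟩ := K.mkQ_surjective y
    exact (Submodule.Quotient.mk_eq_zero K).2 (hK s x ((Submodule.Quotient.mk_eq_zero K).1 hy))
  have hunit (s : p.asIdeal.primeCompl) : IsUnit (algebraMap R (Module.End R (E ⧸ K)) s) := by
    refine (Module.End.isUnit_iff _).2 ⟨(injective_iff_map_eq_zero _).2 (hinj s), fun y => ?_⟩
    obtain ⟨x, rfl⟩ := K.mkQ_surjective y
    obtain ⟨x, rfl⟩ := (hbij s).2 x
    exact ⟨K.mkQ x, (map_smul K.mkQ _ _).symm⟩
  obtain ⟨f, hf⟩ := exists_injective_quotient_of_smul_injective (N := E ⧸ K)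
    (fun s hs => hinj ⟨s, hs⟩) fun a ha y => by
      obtain ⟨x, rfl⟩ := K.mkQ_surjective y
      exact (hp a ha x).imp fun n hn => by rw [← map_smul, hn, map_zero]
  obtain ⟨g, hg, hgf⟩ := exists_injective_resField hunit hf
  refine ⟨LinearMap.range g, fun hbot => ?_, fun s x hx => ?_,
    (extVanishes_congr_left (LinearEquiv.ofInjective g hg)).1 hX⟩
  · rw [LinearMap.range_eq_bot.1 hbot, LinearMap.zero_comp] at hgf
    exact zero_ne_one (hf (by rw [← hgf]; rfl))
  · obtain ⟨y, hy⟩ := hx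
    obtain ⟨y, rfl⟩ := ((Module.End.isUnit_iff _).1
      (IsLocalizedModule.map_units (LocalizedModule.mkLinearMap _ (R ⧸ p.asIdeal)) s)).2 y
    refine ⟨y, ((Module.End.isUnit_iff _).1 (hunit s)).1 ?_⟩
    exact (map_smul g _ _).symm.trans hy

end ResidueField

section InjectiveModules

variable {R : Type} [CommRing R] {p : PrimeSpectrum R} {A B C E I M X : Type}
  [AddCommGroup A] [Module R A] [AddCommGroup B] [Module R B] [AddCommGroup C] [Module R C]
  [AddCommGroup E] [Module R E] [AddCommGroup I] [Module R I] [AddCommGroup M] [Module R M]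
  [AddCommGroup X] [Module R X]

theorem IsShortExact.injective_middle {f : A →ₗ[R] B} {g : B →ₗ[R] C} (h : IsShortExact f g)
    [Module.Injective R A] [Module.Injective R C] : Module.Injective R B :=
  (baer_of_forall_extVanishes_one fun _ _ _ =>
    h.covariant_extVanishes₂ (.of_injective 0) (.of_injective 0)).injective

theorem IsShortExact.injective_right {f : A →ₗ[R] B} {g : B →ₗ[R] C} (h : IsShortExact f g)
    [Module.Injective R A] [Module.Injective R B] : Module.Injective R C :=
  (baer_of_forall_extVanishes_one fun _ _ _ =>
    h.covariant_extVanishes₃ (.of_injective 0) (.of_injective 1)).injective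

variable [IsNoetherianRing R]

theorem IsInjectiveEnvelope.extVanishes_one {f : R ⧸ p.asIdeal →ₗ[R] E}
    (hf : IsInjectiveEnvelope R f) (hX : ExtVanishes R (resField R p) X 1) :
    ExtVanishes R E X 1 := by
  have := hf.1
  have hfp (a : R) (m : R ⧸ p.asIdeal) (ha : a ∈ p.asIdeal) : a • f m = 0 := by
    rw [← map_smul, Algebra.smul_def, Ideal.Quotient.algebraMap_eq,
      Ideal.Quotient.eq_zero_iff_mem.2 ha, zero_mul, map_zero]
  have hfs (s : R) (m : R ⧸ p.asIdeal) (hs : s ∉ p.asIdeal) (hsm : s • f m = 0) : f m = 0 := by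
    rw [← map_smul, map_eq_zero_iff f hf.2.1, Algebra.smul_def, Ideal.Quotient.algebraMap_eq] at hsm
    rw [(mul_eq_zero.1 hsm).resolve_left fun h => hs (Ideal.Quotient.eq_zero_iff_mem.1 h), map_zero]
  refine extVanishes_one_of_residueField (fun s => (Module.End.isUnit_iff _).2 ?_)
    (fun a ha x => ?_) hX
  · have hinj : Function.Injective (LinearMap.lsmul R E s) := by
      refine (injective_iff_map_eq_zero _).2 fun x hx => by_contra fun hx0 => ?_
      obtain ⟨r, m, hrx, hm⟩ := hf.exists_smul_eq hx0
      refine hm (hfs s m s.2 ?_)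
      rw [← hrx, smul_comm]
      exact (congrArg (r • ·) hx).trans (smul_zero r)
    obtain ⟨v, hv⟩ := Module.Injective.extension_property R _ _ _ _ hinj LinearMap.id
    exact ⟨hinj, fun y => ⟨v y, (map_smul v (s : R) y).symm.trans (LinearMap.congr_fun hv y)⟩⟩
  · let ann : ℕ →o Ideal R :=
      ⟨fun n => LinearMap.ker (LinearMap.toSpanSingleton R E (a ^ n • x)),
        monotone_nat_of_le_succ fun n b hb => by
          rw [LinearMap.mem_ker, LinearMap.toSpanSingleton_apply] at hb ⊢
          rw [pow_succ', mul_smul, smul_comm, hb, smul_zero]⟩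
    obtain ⟨n, hn⟩ := monotone_stabilizes_iff_noetherian.2 ‹IsNoetherianRing R› ann
    refine ⟨n, by_contra fun hx0 => ?_⟩
    obtain ⟨r, m, hrx, hm⟩ := hf.exists_smul_eq hx0
    have hr : r ∈ ann (n + 1) := by
      change r • (a ^ (n + 1) • x) = 0
      rw [pow_succ', mul_smul, smul_comm, hrx, hfp a m ha]
    rw [← hn (n + 1) n.le_succ] at hr
    exact hm (hrx.symm.trans hr)

theorem injective_sSup_of_directedOn {c : Set (Submodule R I)} (hne : c.Nonempty)
    (hdir : DirectedOn (· ≤ ·) c) (hc : ∀ K ∈ c, Module.Injective R K) :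
    Module.Injective R ↥(sSup c) := by
  refine Module.Baer.injective fun J g => ?_
  have hfg : ((LinearMap.range g).map (sSup c).subtype).FG :=
    (Module.Finite.iff_fg.1 inferInstance).map _
  obtain ⟨K, hK, hgK⟩ := (CompleteLattice.isCompactElement_iff_le_of_directed_sSup_le _ _).1
    ((Submodule.fg_iff_compact _).1 hfg) c hne hdir (Submodule.map_subtype_le _ _)
  have := hc K hK
  obtain ⟨v, hv⟩ := Module.Injective.extension_property R _ _ _ J.subtype J.injective_subtype
    (LinearMap.codRestrict K ((sSup c).subtype ∘ₗ g) fun x => hgK ⟨g x, ⟨x, rfl⟩, rfl⟩)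
  exact ⟨Submodule.inclusion (le_sSup hK) ∘ₗ v, fun x hx =>
    Subtype.ext (congrArg (fun k : K => (k : I)) (LinearMap.congr_fun hv ⟨x, hx⟩))⟩

theorem extVanishes_one_of_injective [Module.Injective R I]
    (hX : ∀ p : PrimeSpectrum R, p.asIdeal ∈ associatedPrimes R I →
      ExtVanishes R (resField R p) X 1) : ExtVanishes R I X 1 := by
  refine extVanishes_one_of_filtration {K | Module.Injective R K} ?_
    (fun c hc hne hdir => injective_sSup_of_directedOn hne hdir hc) fun K hK hKtop => ?_
  · exact Module.Baer.injective fun J g => ⟨0, fun x hx => Subsingleton.elim _ _⟩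
  have : Module.Injective R K := hK
  have hquot := (IsShortExact.mkQ K).injective_right
  have : Nontrivial (I ⧸ K) := Submodule.Quotient.nontrivial_iff.2 hKtop
  obtain ⟨P, hP⟩ := associatedPrimes.nonempty R (I ⧸ K)
  obtain ⟨s, hs⟩ := (IsShortExact.mkQ K).exists_lift (.of_injective 0) LinearMap.id
  have hPI : P ∈ associatedPrimes R I :=
    associatedPrimes.subset_of_injective (LinearMap.injective_of_comp_eq_id _ _ hs) hP
  obtain ⟨hPprime, f, hf⟩ := (isAssociatedPrime_iff_exists_injective_linearMap _ _).1 hP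
  obtain ⟨Q, hfQ, hQ⟩ := exists_submodule_isInjectiveEnvelope hf
  have := hQ.1
  refine ⟨Q, fun hbot => ?_, (isShortExact_comap_mkQ K Q).injective_middle,
    IsInjectiveEnvelope.extVanishes_one (p := ⟨P, hPprime⟩) hQ (hX ⟨P, hPprime⟩ hPI)⟩
  subst hbot
  exact zero_ne_one (hf ((map_zero f).trans (hfQ 1).symm))

theorem extVanishes_of_injective [Module.Injective R I] (j : ℕ)
    (hX : ∀ p : PrimeSpectrum R, p.asIdeal ∈ associatedPrimes R I →
      ExtVanishes R (resField R p) X (j + 1)) : ExtVanishes R I X (j + 1) := by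
  induction j generalizing X with
  | zero => exact extVanishes_one_of_injective hX
  | succ j ih =>
    obtain ⟨J, _, _, f, _, hf⟩ := exists_injective_embedding R X
    have h := IsShortExact.range_mkQ hf
    exact (h.extVanishes_shift_right).2
      (ih fun p hp => (h.extVanishes_shift_right).1 (hX p hp))

theorem IsInjectiveEnvelope.associatedPrimes_subset {f : M →ₗ[R] E}
    (hf : IsInjectiveEnvelope R f) : associatedPrimes R E ⊆ associatedPrimes R M := by
  intro P hP
  obtain ⟨hPprime, z, hz⟩ := isAssociatedPrime_iff.1 hP
  have hzP (a : R) : a • z = 0 ↔ a ∈ P := by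
    rw [hz, Submodule.mem_colon_singleton, Submodule.mem_bot]
  have hz0 : z ≠ 0 := fun h => hPprime.one_notMem ((hzP 1).1 (by rw [h, smul_zero]))
  obtain ⟨r, m, hrz, hm⟩ := hf.exists_smul_eq hz0
  have hr : r ∉ P := fun h => hm (hrz.symm.trans ((hzP r).2 h))
  refine isAssociatedPrime_iff.2 ⟨hPprime, m, Ideal.ext fun a => ?_⟩
  rw [Submodule.mem_colon_singleton, Submodule.mem_bot, ← map_eq_zero_iff f hf.2.1, map_smul,
    ← hrz, ← mul_smul, hzP, hPprime.mul_mem_iff_mem_or_mem, or_iff_left hr]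

theorem extVanishes_of_localExtVanishes {M : Type} [AddCommGroup M] [Module R M] {d : ℕ}
    (hd : ∀ (N : Type) [AddCommGroup N] [Module R N], ∀ j > d, ExtVanishes R N X j)
    {φ : PrimeSpectrum R → ℕ} (hφ : ∀ p, ∀ j > φ p, ExtVanishes R (resField R p) X j) {j : ℕ}
    (hM : ∀ p i, i + j < φ p → LocalExtVanishes p M i) : ExtVanishes R M X (j + 1) := by
  by_cases hjd : d < j + 1
  · exact hd M _ hjd
  obtain ⟨E, _, _, f, hf⟩ := exists_isInjectiveEnvelope R M
  have := hf.1
  have h := IsShortExact.range_mkQ hf.2.1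
  refine h.contravariant_extVanishes₁ (extVanishes_of_injective j fun p hp => hφ p _ ?_)
    (extVanishes_of_localExtVanishes hd hφ fun p i hi =>
      (hf.localExtVanishes_shift h i).2 (hM p _ (by omega)))
  by_contra hc
  exact localExtVanishes_zero_iff.1 (hM p 0 (by omega)) (hf.associatedPrimes_subset hp)
termination_by d - j

end InjectiveModules

/-! ### A Tor-description of local depth -/

section Coboundaries

variable {R : Type*} [CommRing R] {D : ℕ → Type*} [∀ i, AddCommGroup (D i)]
  [∀ i, Module R (D i)] (δ : ∀ i, D i →ₗ[R] D (i + 1))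

/-- The coboundaries in degree `i` of the cochain complex `D 0 → D 1 → ⋯`; they vanish in
degree `0`. -/
def coboundaries : ∀ i, Submodule R (D i)
  | 0 => ⊥
  | i + 1 => LinearMap.range (δ i)

variable {δ} (hδ : ∀ i, δ (i + 1) ∘ₗ δ i = 0)

/-- The map `D i / coboundaries → D (i + 1)` induced by the differential. -/
def coboundaryQuotientMap (i : ℕ) : D i ⧸ coboundaries δ i →ₗ[R] D (i + 1) :=
  (coboundaries δ i).liftQ (δ i) <| by
    cases i with
    | zero => exact bot_le
    | succ i => exact LinearMap.range_le_ker_iff.2 (hδ i)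

theorem exact_coboundaryQuotientMap_mkQ (i : ℕ) :
    Function.Exact (coboundaryQuotientMap hδ i) (coboundaries δ (i + 1)).mkQ := by
  rw [LinearMap.exact_iff, Submodule.ker_mkQ, coboundaryQuotientMap, Submodule.range_liftQ]
  rfl

theorem lTensor_coboundaryQuotientMap_comp (M : Type*) [AddCommGroup M] [Module R M] (i : ℕ) :
    (coboundaryQuotientMap hδ i).lTensor M ∘ₗ (coboundaries δ i).mkQ.lTensor M =
      (δ i).lTensor M := by
  rw [← LinearMap.lTensor_comp, coboundaryQuotientMap, Submodule.liftQ_mkQ]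

theorem lTensor_coboundaryQuotientMap_zero_injective_iff (M : Type*) [AddCommGroup M]
    [Module R M] : Function.Injective ((coboundaryQuotientMap hδ 0).lTensor M) ↔
      Function.Injective ((δ 0).lTensor M) := by
  have hmkQ : Function.Bijective ((coboundaries δ 0).mkQ.lTensor M) :=
    (LinearEquiv.lTensor M
      (Submodule.quotEquivOfEqBot (coboundaries δ 0) rfl).symm).bijective
  rw [← lTensor_coboundaryQuotientMap_comp hδ M 0, LinearMap.coe_comp,
    Function.Injective.of_comp_iff' _ hmkQ]

theorem lTensor_coboundaryQuotientMap_succ_injective_iff (M : Type*) [AddCommGroup M]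
    [Module R M] (i : ℕ) : Function.Injective ((coboundaryQuotientMap hδ (i + 1)).lTensor M) ↔
      Function.Exact ((δ i).lTensor M) ((δ (i + 1)).lTensor M) := by
  have hexact : Function.Exact ((δ i).lTensor M) ((coboundaries δ (i + 1)).mkQ.lTensor M) :=
    lTensor_exact M (LinearMap.exact_map_mkQ_range (δ i)) (Submodule.mkQ_surjective _)
  rw [← lTensor_coboundaryQuotientMap_comp hδ M (i + 1), LinearMap.coe_comp,
    injective_iff_map_eq_zero,
    (LinearMap.lTensor_surjective M (Submodule.mkQ_surjective _)).forall]
  exact forall_congr' fun z =>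
    ⟨fun h => ⟨fun hz => (hexact z).1 (h hz), fun hz => by
      rw [Function.comp_apply, (hexact z).2 hz, map_zero]⟩, fun h hz => (hexact z).2 (h.1 hz)⟩

end Coboundaries

section BaseChange

open TensorProduct

variable {R A M N : Type*} [CommRing R] [CommRing A] [Algebra R A] [AddCommGroup M] [Module R M]
  [AddCommGroup N] [Module R N] [Module A N] [IsScalarTower R A N] {l : M →ₗ[R] N}
  (hl : IsBaseChange A l)

/-- The isomorphism `M ⊗[R] Hom_A(Aⁿ, A) ≃ Hom_A(Aⁿ, N)` for `N` the base change of `M`. -/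
def tensorDualEquiv (n : ℕ) :
    M ⊗[R] ((Fin n → A) →ₗ[A] A) ≃ₗ[R] ((Fin n → A) →ₗ[A] N) :=
  (LinearEquiv.piRing A A (Fin n) R).lTensor M ≪≫ₗ TensorProduct.piRight R R M (fun _ => A) ≪≫ₗ
    LinearEquiv.piCongrRight (fun _ => TensorProduct.comm R M A ≪≫ₗ hl.equiv.restrictScalars R) ≪≫ₗ
    (LinearEquiv.piRing A N (Fin n) R).symm

theorem tensorDualEquiv_tmul (n : ℕ) (m : M) (f : (Fin n → A) →ₗ[A] A) (x : Fin n → A) :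
    tensorDualEquiv hl n (m ⊗ₜ f) x = f x • l m := by
  have h : tensorDualEquiv hl n (m ⊗ₜ f) = LinearMap.toSpanSingleton A N (l m) ∘ₗ f := by
    refine LinearMap.pi_ext' fun i => LinearMap.ext_ring ?_
    simp [tensorDualEquiv, LinearEquiv.piRing_symm_apply, IsBaseChange.equiv_tmul, Pi.single_apply]
  rw [h]
  rfl

theorem tensorDualEquiv_lTensor_lcomp {n m : ℕ} (d : (Fin m → A) →ₗ[A] (Fin n → A)) :
    d.lcomp R N ∘ₗ (tensorDualEquiv hl n).toLinearMap =
      (tensorDualEquiv hl m).toLinearMap ∘ₗ (d.lcomp R A).lTensor M :=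
  TensorProduct.ext' fun m f => LinearMap.ext fun x => by
    simp [tensorDualEquiv_tmul]

end BaseChange

namespace FiniteFreeResolution

variable {R A T M N : Type} [CommRing R] [CommRing A] [Algebra R A] [AddCommGroup T] [Module A T]
  [AddCommGroup M] [Module R M] [AddCommGroup N] [Module R N] [Module A N] [IsScalarTower R A N]
  (F : FiniteFreeResolution A T)

variable (R) in
/-- The differential of the dual `Hom_A(F, A)` of the resolution, as a map of `R`-modules. -/
def dualD (i : ℕ) : ((Fin (F.rank i) → A) →ₗ[A] A) →ₗ[R] ((Fin (F.rank (i + 1)) → A) →ₗ[A] A) :=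
  (F.d i).lcomp R A

theorem dualD_comp_dualD (i : ℕ) : F.dualD R (i + 1) ∘ₗ F.dualD R i = 0 := by
  ext u
  simp [dualD, d]

theorem extVanishes_iff_lTensor_injective {l : M →ₗ[R] N} (hl : IsBaseChange A l) (i : ℕ) :
    ExtVanishes A T N i ↔
      Function.Injective ((coboundaryQuotientMap (F.dualD_comp_dualD (R := R)) i).lTensor M) := by
  cases i with
  | zero =>
    rw [lTensor_coboundaryQuotientMap_zero_injective_iff, F.extVanishes_zero_iff_injective,
      ← EquivLike.comp_injective _ (tensorDualEquiv hl _),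
      ← EquivLike.injective_comp (tensorDualEquiv hl _)]
    exact iff_of_eq (congrArg (fun u => Function.Injective (DFunLike.coe u))
      (tensorDualEquiv_lTensor_lcomp hl (F.d 0)))
  | succ i =>
    rw [lTensor_coboundaryQuotientMap_succ_injective_iff, F.extVanishes_succ_iff]
    exact (Function.Exact.iff_of_ladder_linearEquiv (tensorDualEquiv_lTensor_lcomp hl (F.d i))
      (tensorDualEquiv_lTensor_lcomp hl (F.d (i + 1))))

end FiniteFreeResolution

theorem extVanishes_characterModule_coboundaryQuotient {R : Type} [CommRing R] {D : ℕ → Type}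
    [∀ i, AddCommGroup (D i)] [∀ i, Module R (D i)] [∀ i, Module.Flat R (D i)]
    {δ : ∀ i, D i →ₗ[R] D (i + 1)} (hδ : ∀ i, δ (i + 1) ∘ₗ δ i = 0) {j : ℕ}
    (h : ∀ i < j, Function.Injective (coboundaryQuotientMap hδ i)) (M : Type) [AddCommGroup M]
    [Module R M] (n : ℕ) :
    ExtVanishes R M (CharacterModule (D j ⧸ coboundaries δ j)) (j + n + 1) := by
  induction j generalizing n with
  | zero =>
    have : Module.Flat R (D 0 ⧸ coboundaries δ 0) := .of_linearEquiv
      (Submodule.quotEquivOfEqBot _ rfl)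
    exact .of_injective _
  | succ j ih =>
    have hS : IsShortExact (coboundaryQuotientMap hδ j) (coboundaries δ (j + 1)).mkQ :=
      ⟨h j j.lt_succ_self, exact_coboundaryQuotientMap_mkQ hδ j, Submodule.mkQ_surjective _⟩
    rw [add_right_comm j 1 n]
    exact hS.extVanishes_characterModule_shift.2 (ih (fun i hi => h i (by omega)) n)

/-- The module constructed here has flat dimension at most `j + 1`, and its `Tor₁` detects the
vanishing of the `j`-th local Ext group: it is the cokernel of the `j`-th differential of the dual
of a finite free resolution of the residue field of `R_p`. -/
theorem exists_characterModule_extVanishes_one_iff {R : Type} [CommRing R] [IsNoetherianRing R]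
    (p : PrimeSpectrum R) {j : ℕ} (h : ∀ i ≤ j, LocalExtVanishes p R i) :
    ∃ (S : Type) (_ : AddCommGroup S) (_ : Module R S),
      (∀ (M : Type) [AddCommGroup M] [Module R M] (n : ℕ),
        ExtVanishes R M (CharacterModule S) (j + 1 + n + 1)) ∧
      ∀ (M : Type) [AddCommGroup M] [Module R M],
        ExtVanishes R M (CharacterModule S) 1 ↔ LocalExtVanishes p M j := by
  let A := Localization.AtPrime p.asIdeal
  have : IsNoetherianRing A := IsLocalization.isNoetherianRing p.asIdeal.primeCompl _ inferInstance
  obtain ⟨F⟩ := FiniteFreeResolution.nonempty A (IsLocalRing.ResidueField A)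
  have hlocal (M : Type) [AddCommGroup M] [Module R M] (i : ℕ) : LocalExtVanishes p M i ↔
      Function.Injective ((coboundaryQuotientMap (F.dualD_comp_dualD (R := R)) i).lTensor M) :=
    F.extVanishes_iff_lTensor_injective (IsLocalizedModule.isBaseChange p.asIdeal.primeCompl A
      (LocalizedModule.mkLinearMap p.asIdeal.primeCompl M)) i
  have hflat (i : ℕ) : Module.Flat R ((Fin (F.rank i) → A) →ₗ[A] A) := .trans R A _
  have hinj : ∀ i < j + 1, Function.Injective (coboundaryQuotientMap F.dualD_comp_dualD i) :=
    fun i hi => (Module.FaithfullyFlat.lTensor_injective_iff_injective R R _).1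
      ((hlocal R i).1 (h i (by omega)))
  have hS : IsShortExact (coboundaryQuotientMap F.dualD_comp_dualD j)
      (coboundaries (F.dualD R) (j + 1)).mkQ :=
    ⟨hinj j j.lt_succ_self, exact_coboundaryQuotientMap_mkQ _ j, Submodule.mkQ_surjective _⟩
  exact ⟨_, _, _, extVanishes_characterModule_coboundaryQuotient F.dualD_comp_dualD hinj,
    fun M _ _ => by rw [hlocal, hS.extVanishes_one_characterModule_iff]⟩

/-! ### Depth classes and hereditary pairs -/

section ResidueField

variable {R : Type} [CommRing R] {p q : PrimeSpectrum R}

theorem nonempty_resField_equiv (p : PrimeSpectrum R) :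
    Nonempty (resField R p ≃ₗ[R] p.asIdeal.ResidueField) := by
  have hcompl : Algebra.algebraMapSubmonoid (R ⧸ p.asIdeal) p.asIdeal.primeCompl =
      nonZeroDivisors (R ⧸ p.asIdeal) := by
    ext x
    obtain ⟨r, rfl⟩ := Ideal.Quotient.mk_surjective x
    rw [mem_nonZeroDivisors_iff_ne_zero, Ne, Ideal.Quotient.eq_zero_iff_mem]
    refine ⟨?_, fun hr => ⟨r, hr, rfl⟩⟩
    rintro ⟨s, hs, hsr⟩ hr
    rw [← Ideal.Quotient.eq_zero_iff_mem, ← hsr] at hr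
    exact hs (Ideal.Quotient.eq_zero_iff_mem.1 hr)
  have : IsLocalizedModule p.asIdeal.primeCompl
      (IsScalarTower.toAlgHom R (R ⧸ p.asIdeal) p.asIdeal.ResidueField).toLinearMap := by
    rw [isLocalizedModule_iff_isLocalization, hcompl]
    exact inferInstanceAs (IsFractionRing (R ⧸ p.asIdeal) p.asIdeal.ResidueField)
  exact ⟨IsLocalizedModule.iso p.asIdeal.primeCompl (IsScalarTower.toAlgHom R _ _).toLinearMap⟩

theorem mem_associatedPrimes_resField [IsNoetherianRing R] :
    p.asIdeal ∈ associatedPrimes R (resField R p) := by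
  refine (isAssociatedPrime_iff_exists_injective_linearMap _ _).2
    ⟨p.2, LocalizedModule.mkLinearMap p.asIdeal.primeCompl _,
      (injective_iff_map_eq_zero _).2 fun x hx => ?_⟩
  obtain ⟨r, rfl⟩ := Ideal.Quotient.mk_surjective x
  obtain ⟨s, hs⟩ := (IsLocalizedModule.eq_zero_iff p.asIdeal.primeCompl _).1 hx
  rw [Submonoid.smul_def, Algebra.smul_def, Ideal.Quotient.algebraMap_eq, ← map_mul,
    Ideal.Quotient.eq_zero_iff_mem] at hs
  exact Ideal.Quotient.eq_zero_iff_mem.2 ((p.2.mem_or_mem hs).resolve_left s.2)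

theorem extVanishes_of_smul_eq_zero {M N : Type} [AddCommGroup M] [Module R M]
    [AddCommGroup N] [Module R N] {a : R} (hN : IsUnit (algebraMap R (Module.End R N) a))
    (hM : ∀ x : M, a • x = 0) (n : ℕ) : ExtVanishes R M N n := by
  refine subsingleton_of_forall_eq 0 fun x => ?_
  obtain ⟨g, hg, -⟩ := isUnit_iff_exists.1 hN
  have hgN : a • ModuleCat.ofHom g = 𝟙 (ModuleCat.of R N) :=
    ModuleCat.hom_ext ((Algebra.smul_def a g).trans hg)
  have haM : a • 𝟙 (ModuleCat.of R M) = 0 := ModuleCat.hom_ext (LinearMap.ext hM)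
  have hx : x = a • x.comp (Abelian.Ext.mk₀ (ModuleCat.ofHom g)) (add_zero n) := by
    rw [← Abelian.Ext.comp_smul, ← Abelian.Ext.mk₀_smul, hgN, Abelian.Ext.comp_mk₀_id]
  rw [hx, ← Abelian.Ext.mk₀_id_comp (x.comp _ _), ← Abelian.Ext.smul_comp,
    ← Abelian.Ext.mk₀_smul, haM, Abelian.Ext.mk₀_zero, Abelian.Ext.zero_comp]

theorem isUnit_algebraMap_end_localizedModule {N : Type} [AddCommGroup N] [Module R N]
    (S : Submonoid R) {a : R} (ha : IsUnit (algebraMap R (Module.End R N) a)) :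
    IsUnit (algebraMap (Localization S) (Module.End (Localization S) (LocalizedModule S N))
      (algebraMap R (Localization S) a)) := by
  have hmap : LocalizedModule.map S (algebraMap R (Module.End R N) a) =
      algebraMap (Localization S) (Module.End (Localization S) (LocalizedModule S N))
        (algebraMap R (Localization S) a) := by
    ext x
    induction x using LocalizedModule.induction_on with
    | h m s =>
      rw [LocalizedModule.map_mk, Module.algebraMap_end_apply, Module.algebraMap_end_apply,
        algebraMap_smul, LocalizedModule.smul'_mk]
  have hbij := (Module.End.isUnit_iff _).1 ha
  rw [Module.End.isUnit_iff, ← hmap]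
  exact ⟨LocalizedModule.map_injective _ _ hbij.1, LocalizedModule.map_surjective _ _ hbij.2⟩

theorem subsingleton_localizedModule_resField (h : ¬p.asIdeal ≤ q.asIdeal) :
    Subsingleton (LocalizedModule q.asIdeal.primeCompl (resField R p)) := by
  obtain ⟨a, hap, haq⟩ := Set.not_subset.1 h
  refine LocalizedModule.subsingleton_iff.2 fun m => ⟨a, haq, ?_⟩
  induction m using LocalizedModule.induction_on with
  | h m s =>
    obtain ⟨r, rfl⟩ := Submodule.Quotient.mk_surjective _ m
    rw [LocalizedModule.smul'_mk, ← Submodule.Quotient.mk_smul, smul_eq_mul,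
      (Submodule.Quotient.mk_eq_zero _).2 (p.asIdeal.mul_mem_right r hap), LocalizedModule.zero_mk]

theorem localExtVanishes_resField (h : q ≠ p) (n : ℕ) :
    LocalExtVanishes q (resField R p) n := by
  by_cases hpq : p.asIdeal ≤ q.asIdeal
  · obtain ⟨a, haq, hap⟩ := Set.not_subset.1 fun hqp => h (PrimeSpectrum.ext (le_antisymm hqp hpq))
    have hunit : IsUnit (algebraMap R (Module.End R (resField R p)) a) :=
      IsLocalizedModule.map_units (LocalizedModule.mkLinearMap _ (R ⧸ p.asIdeal))
        (⟨a, hap⟩ : p.asIdeal.primeCompl)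
    have ha : algebraMap R (Localization.AtPrime q.asIdeal) a ∈ IsLocalRing.maximalIdeal _ :=
      (IsLocalization.AtPrime.to_map_mem_maximal_iff _ q.asIdeal a).2 haq
    exact extVanishes_of_smul_eq_zero (isUnit_algebraMap_end_localizedModule _ hunit)
      (fun x => isTorsionBySet_residueField (x := x) (a := ⟨_, ha⟩)) n
  · have := subsingleton_localizedModule_resField hpq
    exact extVanishes_of_smul_eq_zero (a := 0) (isUnit_of_subsingleton _) (fun x => zero_smul _ x) n

end ResidueField

section OrthogonalClasses

variable {R : Type} [CommRing R] {C P W : Set (ModuleCat.{0} R)} {M : ModuleCat.{0} R} {i : ℕ}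

theorem leftPerp1_rightPerp1_leftPerp1 (P : Set (ModuleCat.{0} R)) :
    leftPerp1 R (rightPerp1 R (leftPerp1 R P)) = leftPerp1 R P :=
  Set.Subset.antisymm (fun _ hM X hX => hM X fun _ hN => hN X hX) fun M hM _ hN => hN M hM

theorem torRight1_torLeft1_torRight1 (P : Set (ModuleCat.{0} R)) :
    torRight1 R (torLeft1 R (torRight1 R P)) = torRight1 R P :=
  Set.Subset.antisymm (fun _ hM X hX => hM X fun _ hN => hN X hX) fun M hM _ hN => hN M hM

theorem extV_succ_of_syzygy_mem (hC : ∀ M ∈ C, ModuleCat.of R (Syzygy R M) ∈ C)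
    {N : ModuleCat.{0} R} (hN : ∀ M ∈ C, extV R M N 1) (i : ℕ) :
    ∀ M ∈ C, extV R M N (i + 1) := by
  induction i with
  | zero => exact hN
  | succ i ih =>
    intro M hM
    rw [extV_iff, (isShortExact_syzygy R M).extVanishes_shift_left]
    exact (extV_iff (ModuleCat.of R (Syzygy R M)) N _).1 (ih _ (hC M hM))

theorem mem_cotShift_succ_iff :
    M ∈ cotShift R W (i + 1) ↔ ModuleCat.of R (Syzygy R M) ∈ cotShift R W i := by
  have hshift (Y : ModuleCat.{0} R) (j : ℕ) :
      extV R M Y (j + 2) ↔ extV R (ModuleCat.of R (Syzygy R M)) Y (j + 1) := by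
    rw [extV_iff, extV_iff, (isShortExact_syzygy R M).extVanishes_shift_left]
  refine forall₂_congr fun Y _ => ⟨fun h j hj => ?_, fun h j hj => ?_⟩
  · obtain ⟨j, rfl⟩ := Nat.exists_eq_add_of_lt hj
    exact (hshift Y _).1 (h _ (by omega))
  · obtain ⟨j, rfl⟩ := Nat.exists_eq_add_of_lt hj
    rw [show i + 1 + j + 1 = i + j + 2 by omega]
    exact (hshift Y _).2 (h _ (by omega))

theorem IsHereditaryCotorsionPair.cotShift_zero (h : IsHereditaryCotorsionPair R C W) :
    cotShift R W 0 = C :=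
  Set.Subset.antisymm (fun _ hM => h.1.1 ▸ fun Y hY => hM Y hY 1 one_pos) fun M hM Y hY =>
    h.2 M hM Y hY

theorem IsHereditaryCotorsionPair.cotShift_eq (h : IsHereditaryCotorsionPair R C W)
    (hP : C = leftPerp1 R P) (i : ℕ) : cotShift R W i = cotShift R P i := by
  have hPW : P ⊆ W := h.1.2 ▸ hP ▸ fun X hX M hM => hM X hX
  have hle (i : ℕ) : cotShift R W i ⊆ cotShift R P i := fun _ hM X hX => hM X (hPW hX)
  induction i with
  | zero =>
    refine Set.Subset.antisymm (hle 0) fun M hM => ?_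
    rw [h.cotShift_zero, hP]
    exact fun X hX => hM X hX 1 one_pos
  | succ i ih =>
    ext M
    rw [mem_cotShift_succ_iff, mem_cotShift_succ_iff, ih]

theorem GoodI.goodII {E : Set (ModuleCat.{0} R)} (h : GoodI R E C) :
    GoodII R C (rightPerp1 R C) := by
  obtain ⟨⟨⟨-, hC⟩, hTor⟩, G, hG, hCG⟩ := h
  let P : Set (ModuleCat.{0} R) :=
    (fun X : ModuleCat.{0} R => ModuleCat.of R (CharacterModule X)) '' G
  have hP : C = leftPerp1 R P := by
    ext M
    rw [hCG, leftPerp1, Set.mem_ofPred_eq, Set.forall_mem_image]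
    exact forall₂_congr fun X _ => (torV_succ_iff X M 0).trans
      (extV_iff M (ModuleCat.of R (CharacterModule X)) 1).symm
  have hsyz : ∀ M ∈ C, ModuleCat.of R (Syzygy R M) ∈ C := by
    intro M hM
    rw [hC]
    intro X hX
    rw [torV_succ_iff, ← (isShortExact_syzygy R M).extVanishes_shift_left, ← torV_succ_iff]
    exact hTor X hX M hM 2 one_le_two
  refine ⟨⟨⟨?_, rfl⟩, fun M hM N hN i hi => ?_⟩, P, ?_, hP⟩
  · rw [hP, leftPerp1_rightPerp1_leftPerp1]
  · obtain ⟨i, rfl⟩ := Nat.exists_eq_add_of_le' hi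
    exact extV_succ_of_syzygy_mem hsyz hN i M hM
  · rintro _ ⟨X, hX, rfl⟩
    obtain ⟨n, hn⟩ := hG X hX
    exact ⟨pureInjective_characterModule R X, n, (flatDimLE_iff_injDimLE X n).1 hn⟩

end OrthogonalClasses

section DepthClass

variable {R : Type} [CommRing R] {φ : PrimeSpectrum R → ℕ} {p : PrimeSpectrum R}

theorem mem_depthClass_iff {M : ModuleCat.{0} R} :
    M ∈ depthClass R φ ↔ ∀ p, ∀ i < φ p, LocalExtVanishes p M i :=
  forall_congr' fun _ => le_depthAt_iff

theorem goodIII_iff : GoodIII R φ ↔ ∀ p, ∀ i < φ p, LocalExtVanishes p R i :=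
  forall_congr' fun _ => le_rdepth_iff

variable [IsNoetherianRing R]

theorem LocalExtVanishes.of_projective {F : Type} [AddCommGroup F] [Module R F]
    [Module.Projective R F] {j : ℕ} (h : ∀ i ≤ j, LocalExtVanishes p R i) :
    LocalExtVanishes p F j := by
  obtain ⟨S, _, _, -, hS⟩ := exists_characterModule_extVanishes_one_iff p h
  exact (hS F).1 (ExtVanishes.of_projective 0)

theorem IsShortExact.localExtVanishes_shift {A B C : Type} [AddCommGroup A] [Module R A]
    [AddCommGroup B] [Module R B] [AddCommGroup C] [Module R C] [Module.Projective R B]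
    {f : A →ₗ[R] B} {g : B →ₗ[R] C} (h : IsShortExact f g) {m : ℕ}
    (hR : ∀ i < m, LocalExtVanishes p R i) (n : ℕ) :
    (∀ i, i + n < m → LocalExtVanishes p A i) ↔
      ∀ i, i + (n + 1) < m → LocalExtVanishes p C i := by
  have hB : ∀ i < m, LocalExtVanishes p B i := fun i hi =>
    .of_projective fun k hk => hR k (hk.trans_lt hi)
  have hloc := h.localizedModule p.asIdeal.primeCompl
  refine ⟨fun hA i hi => ?_, fun hC i hi => ?_⟩
  · exact hloc.covariant_extVanishes₃ (hB i (by omega)) (hA (i + 1) (by omega))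
  cases i with
  | zero =>
    have hB0 := localExtVanishes_zero_iff.1 (hB 0 (by omega))
    exact localExtVanishes_zero_iff.2 fun hp =>
      hB0 (associatedPrimes.subset_of_injective h.injective hp)
  | succ i => exact hloc.covariant_extVanishes₁ (hC i (by omega)) (hB (i + 1) (by omega))

theorem GoodIII.syzygy_mem_depthClass (hφ : GoodIII R φ) {M : ModuleCat.{0} R}
    (hM : M ∈ depthClass R φ) : ModuleCat.of R (Syzygy R M) ∈ depthClass R φ :=
  mem_depthClass_iff.2 fun p => ((isShortExact_syzygy R M).localExtVanishes_shift
    (goodIII_iff.1 hφ p) 0).2 fun i hi => mem_depthClass_iff.1 hM p i (by omega)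

theorem GoodIII.mem_cotShift_iff (hφ : GoodIII R φ) {W : Set (ModuleCat.{0} R)}
    (h : IsHereditaryCotorsionPair R (depthClass R φ) W) {i : ℕ} {M : ModuleCat.{0} R} :
    M ∈ cotShift R W i ↔ ∀ p j, j + i < φ p → LocalExtVanishes p M j := by
  induction i generalizing M with
  | zero => rw [h.cotShift_zero, mem_depthClass_iff]; rfl
  | succ i ih =>
    rw [mem_cotShift_succ_iff, ih]
    exact forall_congr' fun p =>
      (isShortExact_syzygy R M).localExtVanishes_shift (goodIII_iff.1 hφ p) i

theorem GoodIII.exists_depthClass_eq_torRight1 (hφ : GoodIII R φ) :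
    ∃ G : Set (ModuleCat.{0} R),
      (∀ X ∈ G, ∃ n, flatDimLE R X n) ∧ depthClass R φ = torRight1 R G := by
  refine ⟨{X | ∃ p, ∃ j < φ p, flatDimLE R X (j + 1) ∧
    ∀ M : ModuleCat.{0} R, torV R X M 1 ↔ LocalExtVanishes p M j},
    fun X ⟨_, _, _, hX, _⟩ => ⟨_, hX⟩, ?_⟩
  refine Set.Subset.antisymm (fun M hM X ⟨p, j, hj, _, hX⟩ =>
    (hX M).2 (mem_depthClass_iff.1 hM p j hj)) fun M hM => mem_depthClass_iff.2 fun p j hj => ?_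
  obtain ⟨S, _, _, hdim, hS⟩ := exists_characterModule_extVanishes_one_iff p fun i hi =>
    goodIII_iff.1 hφ p i (hi.trans_lt hj)
  have hTor (N : ModuleCat.{0} R) : torV R (ModuleCat.of R S) N 1 ↔ LocalExtVanishes p N j :=
    (torV_succ_iff _ N 0).trans (hS N)
  refine (hTor M).1 (hM _ ⟨p, j, hj, (flatDimLE_iff_injDimLE _ _).2 fun N k hk => ?_, hTor⟩)
  obtain ⟨k, rfl⟩ := Nat.exists_eq_add_of_lt hk
  exact (extV_iff _ _ _).2 (hdim N k)

theorem GoodIII.goodI (hφ : GoodIII R φ) :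
    GoodI R (torLeft1 R (depthClass R φ)) (depthClass R φ) := by
  obtain ⟨G, hG, hCG⟩ := hφ.exists_depthClass_eq_torRight1
  refine ⟨⟨⟨rfl, by rw [hCG, torRight1_torLeft1_torRight1]⟩, fun X hX M hM i hi => ?_⟩, G, hG, hCG⟩
  obtain ⟨i, rfl⟩ := Nat.exists_eq_add_of_le' hi
  rw [torV_succ_iff]
  refine (extV_iff M (ModuleCat.of R (CharacterModule X)) _).1 (extV_succ_of_syzygy_mem
    (fun _ => hφ.syzygy_mem_depthClass) (fun N hN => ?_) i M hM)
  exact (extV_iff _ _ _).2 ((torV_succ_iff X N 0).1 (hX N hN))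

theorem GoodIII.phiOfCot_rightPerp1_depthClass (hφ : GoodIII R φ) :
    phiOfCot R (rightPerp1 R (depthClass R φ)) = φ := by
  funext p
  have hIci : {i | ModuleCat.of R (resField R p) ∈
      cotShift R (rightPerp1 R (depthClass R φ)) i} = Set.Ici (φ p) := by
    ext i
    rw [Set.mem_ofPred_eq, hφ.mem_cotShift_iff hφ.goodI.goodII.1, Set.mem_Ici]
    refine ⟨fun h => not_lt.1 fun hi => ?_, fun h q j hj => localExtVanishes_resField ?_ j⟩
    · exact localExtVanishes_zero_iff.1 (h p 0 (by omega)) mem_associatedPrimes_resField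
    · rintro rfl
      omega
  rw [phiOfCot, hIci, csInf_Ici]

end DepthClass

namespace GoodII

variable {R : Type} [CommRing R] {C W : Set (ModuleCat.{0} R)} {p : PrimeSpectrum R}

theorem ring_mem (h : GoodII R C W) : ModuleCat.of R R ∈ C := by
  rw [h.1.1.1]
  exact fun Y _ => (extV_iff _ _ _).2 (ExtVanishes.of_projective 0)

variable [IsNoetherianRing R]

theorem resField_mem_cotShift (h : GoodII R C W) {M : ModuleCat.{0} R} (hM : M ∈ C) {m : ℕ}
    (hm : ¬LocalExtVanishes p M m) : ModuleCat.of R (resField R p) ∈ cotShift R W m := by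
  obtain ⟨hCW, P, hP, hC⟩ := h
  rw [hCW.cotShift_eq hC]
  intro X hX j hj
  obtain ⟨hpure, d, hd⟩ := hP X hX
  obtain ⟨e⟩ := nonempty_resField_equiv p
  rw [← hCW.cotShift_zero, hCW.cotShift_eq hC] at hM
  rw [extV_iff]
  refine (extVanishes_congr_left e).2 ?_
  exact hpure.extVanishes_residueField_of_not_localExtVanishes
    (fun N _ _ j hj => (extV_iff _ _ _).1 (hd (ModuleCat.of R N) j hj))
    (fun j => (extV_iff _ _ _).1 (hM X hX (j + 1) j.succ_pos)) hm j hj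

theorem resField_mem_cotShift_phiOfCot (h : GoodII R C W) (p : PrimeSpectrum R) :
    ModuleCat.of R (resField R p) ∈ cotShift R W (phiOfCot R W p) := by
  obtain ⟨i, hi⟩ := exists_not_localExtVanishes_self (p := p)
  exact Nat.sInf_mem (s := {i | ModuleCat.of R (resField R p) ∈ cotShift R W i})
    ⟨i, h.resField_mem_cotShift h.ring_mem hi⟩

theorem localExtVanishes (h : GoodII R C W) {M : ModuleCat.{0} R} (hM : M ∈ C) {i : ℕ}
    (hi : i < phiOfCot R W p) : LocalExtVanishes p M i :=
  of_not_not fun hc => hi.not_ge (Nat.sInf_le (h.resField_mem_cotShift hM hc))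

theorem goodIII (h : GoodII R C W) : GoodIII R (phiOfCot R W) :=
  goodIII_iff.2 fun _ _ => h.localExtVanishes h.ring_mem

theorem depthClass_phiOfCot (h : GoodII R C W) : depthClass R (phiOfCot R W) = C := by
  refine Set.Subset.antisymm (fun M hM => ?_) fun M hM =>
    mem_depthClass_iff.2 fun p i => h.localExtVanishes hM
  have hres := h.resField_mem_cotShift_phiOfCot
  obtain ⟨hCW, P, hP, hC⟩ := h
  rw [hC]
  intro X hX
  obtain ⟨-, d, hd⟩ := hP X hX
  rw [extV_iff]
  refine extVanishes_of_localExtVanishes (j := 0)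
    (fun N _ _ j hj => (extV_iff _ _ _).1 (hd (ModuleCat.of R N) j hj))
    (fun p j hj => ?_) (mem_depthClass_iff.1 hM)
  exact (extV_iff _ _ _).1 ((hCW.cotShift_eq hC _ ▸ hres p) X hX j hj)

theorem seqOfCot_eq (h : GoodII R C W) (n : ℕ) : seqOfCot R W n = {p | phiOfCot R W p ≤ n} := by
  have hdepth : IsHereditaryCotorsionPair R (depthClass R (phiOfCot R W)) W := by
    rw [h.depthClass_phiOfCot]
    exact h.1
  refine Set.Subset.antisymm (fun p ⟨M, hM, hp⟩ => ?_) fun p hp => ?_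
  · rw [Set.mem_ofPred_eq]
    refine not_lt.1 fun hn => ?_
    have hM0 := (h.goodIII.mem_cotShift_iff hdepth).1 hM p 0 (by omega)
    exact localExtVanishes_zero_iff.1 hM0 hp
  · exact ⟨_, fun Y hY j hj => h.resField_mem_cotShift_phiOfCot p Y hY j (hp.trans_lt hj),
      mem_associatedPrimes_resField⟩

theorem goodIV (h : GoodII R C W) : GoodIV R (seqOfCot R W) := by
  simp only [GoodIV, h.seqOfCot_eq]
  refine ⟨fun n p hp => Nat.le_succ_of_le hp, fun n s p hp => ?_⟩
  rw [Set.mem_ofPred_eq]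
  exact not_lt.1 fun hn =>
    (s.mem_associatedPrimes_iff n).1 hp (h.localExtVanishes h.ring_mem hn)

theorem eq_of_seqOfCot_eq {C' W' : Set (ModuleCat.{0} R)} (h : GoodII R C W)
    (h' : GoodII R C' W') (hseq : seqOfCot R W = seqOfCot R W') : C = C' ∧ W = W' := by
  have hφ : phiOfCot R W = phiOfCot R W' := by
    refine funext fun p => eq_of_forall_ge_iff fun n => ?_
    have hn := congrFun hseq n
    rw [h.seqOfCot_eq, h'.seqOfCot_eq] at hn
    exact Set.ext_iff.1 hn p
  have hC : C = C' := by rw [← h.depthClass_phiOfCot, ← h'.depthClass_phiOfCot, hφ]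
  exact ⟨hC, by rw [h.1.1.2, h'.1.1.2, hC]⟩

end GoodII

theorem GoodIV.exists_goodII {R : Type} [CommRing R] [IsNoetherianRing R]
    {X : ℕ → Set (PrimeSpectrum R)} (hX : GoodIV R X) :
    ∃ C W : Set (ModuleCat.{0} R), GoodII R C W ∧ seqOfCot R W = X := by
  obtain ⟨s⟩ := nonempty_cosyzygySeq R R
  have hmem : ∀ p n, ¬LocalExtVanishes p R n → p ∈ X n := fun p n h =>
    hX.2 n s ((s.mem_associatedPrimes_iff n).2 h)
  let φ : PrimeSpectrum R → ℕ := fun p => sInf {n | p ∈ X n}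
  have hφ : GoodIII R φ := goodIII_iff.2 fun p i hi =>
    of_not_not fun hc => hi.not_ge (Nat.sInf_le (hmem p i hc))
  refine ⟨_, _, hφ.goodI.goodII, funext fun n => ?_⟩
  rw [hφ.goodI.goodII.seqOfCot_eq, hφ.phiOfCot_rightPerp1_depthClass]
  refine Set.Subset.antisymm (fun p hp => ?_) fun p hp => Nat.sInf_le hp
  obtain ⟨i, hi⟩ := exists_not_localExtVanishes_self (p := p)
  exact monotone_nat_of_le_succ hX.1 hp (Nat.sInf_mem (s := {n | p ∈ X n}) ⟨i, hmem p i hi⟩)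

section Stmt17

variable (R : Type) [CommRing R]

/-- main classification: over a commutative noetherian ring the four
collections (i)-(iv) are in bijective correspondence via the explicit assignments
`(ℰ,𝒞) ↦ (𝒞, 𝒞^⊥)`, `φ ↦ (^⊤(𝒞_φ), 𝒞_φ)`, `(𝒞,𝒲) ↦ φ_𝒞` and `(𝒞,𝒲) ↦ (Ass 𝒞_(n))_n`,
and these assignments are mutually inverse bijections. -/
theorem stmt17 [IsNoetherianRing R] :
    -- the assignment (i) → (ii) is well defined
    (∀ ℰ 𝒞 : Set (ModuleCat.{0} R), GoodI R ℰ 𝒞 → GoodII R 𝒞 (rightPerp1 R 𝒞)) ∧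
    -- the assignment (iii) → (i) is well defined
    (∀ φ : PrimeSpectrum R → ℕ, GoodIII R φ →
      GoodI R (torLeft1 R (depthClass R φ)) (depthClass R φ)) ∧
    -- the assignments (ii) → (iii) and (ii) → (iv) are well defined
    (∀ 𝒞 𝒲 : Set (ModuleCat.{0} R), GoodII R 𝒞 𝒲 →
      GoodIII R (phiOfCot R 𝒲) ∧ GoodIV R (seqOfCot R 𝒲)) ∧
    -- round trip (iii) → (i) → (ii) → (iii)
    (∀ φ : PrimeSpectrum R → ℕ, GoodIII R φ →
      phiOfCot R (rightPerp1 R (depthClass R φ)) = φ) ∧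
    -- round trip (i) → (ii) → (iii) → (i)
    (∀ ℰ 𝒞 : Set (ModuleCat.{0} R), GoodI R ℰ 𝒞 →
      torLeft1 R (depthClass R (phiOfCot R (rightPerp1 R 𝒞))) = ℰ ∧
      depthClass R (phiOfCot R (rightPerp1 R 𝒞)) = 𝒞) ∧
    -- round trip (ii) → (iii) → (i) → (ii)
    (∀ 𝒞 𝒲 : Set (ModuleCat.{0} R), GoodII R 𝒞 𝒲 →
      depthClass R (phiOfCot R 𝒲) = 𝒞 ∧
      rightPerp1 R (depthClass R (phiOfCot R 𝒲)) = 𝒲) ∧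
    -- the assignment (ii) → (iv) is injective
    (∀ 𝒞 𝒲 𝒞' 𝒲' : Set (ModuleCat.{0} R), GoodII R 𝒞 𝒲 → GoodII R 𝒞' 𝒲' →
      seqOfCot R 𝒲 = seqOfCot R 𝒲' → 𝒞 = 𝒞' ∧ 𝒲 = 𝒲') ∧
    -- the assignment (ii) → (iv) is surjective
    (∀ X : ℕ → Set (PrimeSpectrum R), GoodIV R X →
      ∃ 𝒞 𝒲 : Set (ModuleCat.{0} R), GoodII R 𝒞 𝒲 ∧ seqOfCot R 𝒲 = X) := by
  refine ⟨fun E C h => h.goodII, fun φ h => h.goodI, fun C W h => ⟨h.goodIII, h.goodIV⟩,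
    fun φ h => h.phiOfCot_rightPerp1_depthClass, fun E C h => ?_, fun C W h => ?_,
    fun C W C' W' h h' he => h.eq_of_seqOfCot_eq h' he, fun X h => h.exists_goodII⟩
  · have hC := h.goodII.depthClass_phiOfCot
    exact ⟨by rw [hC]; exact h.1.1.1.symm, hC⟩
  · have hC := h.depthClass_phiOfCot
    exact ⟨hC, by rw [hC]; exact h.1.1.2.symm⟩

end Stmt17
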